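/- arXiv:2308.08274 — 3 statements merged into one kernel-verified Lean document; each statement's English description precedes it below -/
import Mathlib

section
/- For every λ ∈ (0,∞), the family (K_{s,t}(ε, B + ρ))_{s<t, ε>0, ρ∈ℝ} has the same law (as a family indexed by s, t, ε, ρ) as (K_{λ^{1/H} s, λ^{1/H} t}(λε, B + λρ))_{s<t, ε>0, ρ∈ℝ}. -/
open MeasureTheory ProbabilityTheory Filter Set ENNReal Asymptotics
open scoped NNReal Classical Topology

noncomputable section

/-- The grid `εℤ` of levels. -/
def lvGrid (ε : ℝ) : Set ℝ := {x | ∃ k : ℤ, x = ε * k}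

/-- The successive times at which the path `w` crosses to a new point of the grid `εℤ`,
with values in `ℝ≥0∞` (`∞` meaning "never", corresponding to the convention `inf ∅ = +∞`). -/
def hitT (ε : ℝ) (w : ℝ → ℝ) : ℕ → ℝ≥0∞
  | 0 => 0
  | n + 1 =>
      ⨅ (r : ℝ) (_ : hitT ε w n < ENNReal.ofReal r ∧ w r ∈ lvGrid ε ∧
          w r ≠ w ((hitT ε w n).toReal)), ENNReal.ofReal r

/-- `K_{s,t}(ε,w)`: the number of `ε`-level crossings of `w` in the interval `[s,t]`,
namely `#{n ≥ 2 : T_n(ε, w_{s+·}) ≤ t-s} + 1_{w_s ∈ εℤ}·1_{T_1(ε, w_{s+·}) ≤ t-s}`,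
as an extended natural number. -/
def crossK (ε : ℝ) (w : ℝ → ℝ) (s t : ℝ) : ℕ∞ :=
  {n : ℕ | 2 ≤ n ∧ hitT ε (fun r => w (s + r)) n ≤ ENNReal.ofReal (t - s)}.encard
    + (if w s ∈ lvGrid ε ∧ hitT ε (fun r => w (s + r)) 1 ≤ ENNReal.ofReal (t - s)
        then 1 else 0)

/-- `K_{s,t}(ε,w)` as an extended nonnegative real. -/
def crossKe (ε : ℝ) (w : ℝ → ℝ) (s t : ℝ) : ℝ≥0∞ := (crossK ε w s t : ℝ≥0∞)

/-- `K_{s,t}(ε,w)` as a real number (junk value `0` if the count is infinite). -/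
def crossKR (ε : ℝ) (w : ℝ → ℝ) (s t : ℝ) : ℝ := (crossKe ε w s t).toReal

/-- The averaged crossing count `K̄_{s,t}(ε,w) = ε⁻¹ ∫_{-ε/2}^{ε/2} K_{s,t}(ε, w+ρ) dρ`. -/
def avgK (ε : ℝ) (w : ℝ → ℝ) (s t : ℝ) : ℝ≥0∞ :=
  ENNReal.ofReal ε⁻¹ * ∫⁻ ρ in Set.Ioo (-(ε / 2)) (ε / 2), crossKe ε (fun r => w r + ρ) s t

/-- `B` is a fractional Brownian motion with Hurst parameter `H` under `P`:
a centered Gaussian process with continuous paths, `B 0 = 0`, and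
`E[(B_t - B_s)^2] = a_H |t-s|^(2H)` for some constant `a_H > 0`. -/
def IsFBM {Ω : Type*} [MeasurableSpace Ω] (H : ℝ) (P : Measure Ω) (B : ℝ → Ω → ℝ) : Prop :=
  (∀ ω, Continuous fun t => B t ω) ∧ (∀ ω, B 0 ω = 0) ∧ (∀ t, Measurable (B t)) ∧
  (∀ (n : ℕ) (t : Fin n → ℝ) (c : Fin n → ℝ), ∃ v : ℝ≥0,
      Measure.map (fun ω => ∑ i, c i * B (t i) ω) P = gaussianReal 0 v) ∧
  (∃ aH : ℝ, 0 < aH ∧ ∀ s t : ℝ, ∫ ω, (B t ω - B s ω) ^ 2 ∂P = aH * |t - s| ^ (2 * H))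

/-- The index set for the scaling property of `K`: quadruples `((s,t),(ε,ρ))`
with `s < t` and `ε > 0`. -/
def Idx4 : Type := {q : (ℝ × ℝ) × ℝ × ℝ // q.1.1 < q.1.2 ∧ 0 < q.2.1}

lemma hitT_scale {l c ε : ℝ} (hl : 0 < l) (hc : 0 < c) {w v : ℝ → ℝ}
    (h : ∀ r, w (c * r) = l * v r) (n : ℕ) :
    hitT (l * ε) w n = ENNReal.ofReal c * hitT ε v n := by
  have hc0 : ENNReal.ofReal c ≠ 0 := by simpa using hc
  have hct : ENNReal.ofReal c ≠ ∞ := ENNReal.ofReal_ne_top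
  induction n with
  | zero => simp [hitT]
  | succ n ih =>
    simp only [hitT]
    rw [ih, ENNReal.mul_iInf_of_ne hc0 hct]
    symm
    refine Equiv.iInf_congr (Equiv.mulLeft₀ c hc.ne') fun r => ?_
    rw [ENNReal.mul_iInf_of_ne hc0 hct]
    have e1 : (Equiv.mulLeft₀ c hc.ne') r = c * r := rfl
    rw [e1, ENNReal.ofReal_mul hc.le, ENNReal.toReal_mul, ENNReal.toReal_ofReal hc.le, h, h]
    refine iInf_congr_Prop ?_ fun _ => rfl
    rw [ENNReal.mul_lt_mul_iff_right hc0 hct]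
    have e2 : l * v r ∈ lvGrid (l * ε) ↔ v r ∈ lvGrid ε := by
      simp only [lvGrid, mem_ofPred_eq, mul_assoc, mul_right_inj' hl.ne']
    rw [e2, (mul_right_injective₀ hl.ne').ne_iff]

lemma crossKR_scale {l c ε : ℝ} (hl : 0 < l) (hc : 0 < c) {w v : ℝ → ℝ}
    (h : ∀ r, w (c * r) = l * v r) (s t : ℝ) :
    crossKR (l * ε) w (c * s) (c * t) = crossKR ε v s t := by
  have hc0 : ENNReal.ofReal c ≠ 0 := by simpa using hc
  have hct : ENNReal.ofReal c ≠ ∞ := ENNReal.ofReal_ne_top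
  have hs : ∀ n, hitT (l * ε) (fun r => w (c * s + r)) n
      = ENNReal.ofReal c * hitT ε (fun r => v (s + r)) n := by
    intro n
    apply hitT_scale hl hc
    intro r
    rw [← h, mul_add]
  have e2 : l * v s ∈ lvGrid (l * ε) ↔ v s ∈ lvGrid ε := by
    simp only [lvGrid, mem_ofPred_eq, mul_assoc, mul_right_inj' hl.ne']
  simp only [crossKR, crossKe, crossK, hs, ← mul_sub, ENNReal.ofReal_mul hc.le,
    ENNReal.mul_le_mul_iff_right hc0 hct, h, e2]

lemma isClosed_lvGrid_diff {ε : ℝ} (hε : 0 < ε) (y : ℝ) : IsClosed (lvGrid ε \ {y}) := by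
  have h1 : Topology.IsClosedEmbedding (fun k : ℤ => ε * (k : ℝ)) :=
    (Homeomorph.mulLeft₀ ε hε.ne').isClosedEmbedding.comp Int.isClosedEmbedding_coe_real
  have : lvGrid ε \ {y} = (fun k : ℤ => ε * (k : ℝ)) '' {k | ε * (k : ℝ) ≠ y} := by
    ext x
    simp only [lvGrid, Set.mem_sdiff, mem_ofPred_eq, mem_singleton_iff, mem_image]
    constructor
    · rintro ⟨⟨k, rfl⟩, h⟩; exact ⟨k, h, rfl⟩
    · rintro ⟨k, h, rfl⟩; exact ⟨⟨k, rfl⟩, h⟩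
  rw [this]
  exact h1.isClosedMap _ (isClosed_discrete _)

lemma exists_hit_iff {w : ℝ → ℝ} (hw : Continuous w) {T a c : ℝ} (hT : T ≤ a) :
    (∃ r ∈ Icc T a, w r = c) ↔
      ∀ m : ℕ, ∃ θ : ℚ, (θ : ℝ) ∈ Icc (0 : ℝ) 1 ∧ |w (T + θ * (a - T)) - c| < 1 / ((m : ℝ) + 1) := by
  have hf : Continuous fun θ : ℝ => |w (T + θ * (a - T)) - c| := by fun_prop
  constructor
  · rintro ⟨r, hr, hrc⟩ m
    obtain ⟨θ, hθ, hθr⟩ : ∃ θ ∈ Icc (0 : ℝ) 1, T + θ * (a - T) = r := by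
      rcases hT.eq_or_lt with h | h
      · subst h
        exact ⟨0, by simp, by simpa using le_antisymm hr.1 hr.2⟩
      · have : 0 < a - T := by linarith
        refine ⟨(r - T) / (a - T), ⟨div_nonneg (by linarith [hr.1]) this.le,
          (div_le_one this).2 (by linarith [hr.2])⟩, ?_⟩
        field_simp
        ring
    have hU : IsOpen {θ : ℝ | |w (T + θ * (a - T)) - c| < 1 / ((m : ℝ) + 1)} :=
      isOpen_lt hf continuous_const
    have hmem : θ ∈ {θ : ℝ | |w (T + θ * (a - T)) - c| < 1 / ((m : ℝ) + 1)} := by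
      simp only [mem_ofPred_eq, hθr, hrc, sub_self, abs_zero]
      positivity
    have hcl : θ ∈ closure (Ioo (0 : ℝ) 1) := by
      rw [closure_Ioo (by norm_num)]; exact hθ
    have hne := mem_closure_iff.1 hcl _ hU hmem
    obtain ⟨q, hq⟩ := Rat.denseRange_cast.exists_mem_open (hU.inter isOpen_Ioo) hne
    exact ⟨q, ⟨hq.2.1.le, hq.2.2.le⟩, hq.1⟩
  · intro h
    obtain ⟨θ, hθ, hmin⟩ := (isCompact_Icc (a := (0 : ℝ)) (b := 1)).exists_isMinOn
      ⟨0, by simp⟩ hf.continuousOn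
    by_contra hcon
    push Not at hcon
    have hpos : 0 < |w (T + θ * (a - T)) - c| := by
      rw [abs_pos, sub_ne_zero]
      apply hcon
      constructor
      · nlinarith [hθ.1]
      · nlinarith [hθ.2]
    obtain ⟨m, hm⟩ := exists_nat_one_div_lt hpos
    obtain ⟨q, hq, hlt⟩ := h m
    have := hmin hq
    simp only [mem_ofPred_eq] at this
    linarith

lemma hitT_succ_le_iff {w : ℝ → ℝ} (hw : Continuous w) {ε : ℝ} (hε : 0 < ε) (n : ℕ)
    {a : ℝ} (ha : 0 ≤ a) :
    hitT ε w (n + 1) ≤ ENNReal.ofReal a ↔ hitT ε w n ≤ ENNReal.ofReal a ∧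
      ∃ k : ℤ, ε * k ≠ w (hitT ε w n).toReal ∧
        ∃ r ∈ Icc (hitT ε w n).toReal a, w r = ε * k := by
  generalize hTT : hitT ε w n = T
  simp only [hitT, hTT]
  constructor
  · intro h
    have key : ∀ b, a < b → ∃ r, T < ENNReal.ofReal r ∧ w r ∈ lvGrid ε ∧
        w r ≠ w T.toReal ∧ r < b := by
      intro b hb
      have : (⨅ (r : ℝ) (_ : T < ENNReal.ofReal r ∧ w r ∈ lvGrid ε ∧ w r ≠ w T.toReal),
          ENNReal.ofReal r) < ENNReal.ofReal b :=
        h.trans_lt ((ENNReal.ofReal_lt_ofReal_iff (ha.trans_lt hb)).2 hb)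
      simp only [iInf_lt_iff] at this
      obtain ⟨r, ⟨h1, h2, h3⟩, h4⟩ := this
      exact ⟨r, h1, h2, h3, (ENNReal.ofReal_lt_ofReal_iff (ha.trans_lt hb)).1 h4⟩
    have hTtop : T ≠ ∞ := by
      obtain ⟨r, h1, -⟩ := key (a + 1) (by linarith)
      exact (h1.trans_le le_top).ne
    have key2 : ∀ b, a < b → ∃ r, T.toReal < r ∧ w r ∈ lvGrid ε \ {w T.toReal} ∧ r < b := by
      intro b hb
      obtain ⟨r, h1, h2, h3, h4⟩ := key b hb
      exact ⟨r, (ENNReal.lt_ofReal_iff_toReal_lt hTtop).1 h1, ⟨h2, h3⟩, h4⟩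
    have hS : IsCompact (Icc T.toReal (a + 1) ∩ w ⁻¹' (lvGrid ε \ {w T.toReal})) :=
      isCompact_Icc.inter_right ((isClosed_lvGrid_diff hε _).preimage hw)
    obtain ⟨r0, hr0, hmin⟩ := hS.exists_isLeast (by
      obtain ⟨r, h1, h2, h3⟩ := key2 (a + 1) (by linarith)
      exact ⟨r, ⟨h1.le, h3.le⟩, h2⟩)
    have hr0a : r0 ≤ a := by
      by_contra hcon
      push Not at hcon
      obtain ⟨r, h1, h2, h3⟩ := key2 (min r0 (a + 1)) (lt_min hcon (by linarith))
      have := hmin ⟨⟨h1.le, (h3.le.trans (min_le_right _ _))⟩, h2⟩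
      linarith [h3.trans_le (min_le_left _ _)]
    refine ⟨?_, ?_⟩
    · rw [ENNReal.le_ofReal_iff_toReal_le hTtop ha]
      exact hr0.1.1.trans hr0a
    · obtain ⟨⟨k, hk⟩, hne⟩ := hr0.2
      exact ⟨k, by rw [← hk]; exact hne, r0, ⟨hr0.1.1, hr0a⟩, hk⟩
  · rintro ⟨hTa, k, hk, r, hr, hrk⟩
    have hTtop : T ≠ ∞ := (hTa.trans_lt ENNReal.ofReal_lt_top).ne
    refine (iInf₂_le r ⟨?_, ⟨k, hrk⟩, ?_⟩).trans (ENNReal.ofReal_le_ofReal hr.2)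
    · rw [ENNReal.lt_ofReal_iff_toReal_lt hTtop]
      refine lt_of_le_of_ne hr.1 ?_
      intro h
      apply hk
      rw [h, hrk]
    · rw [hrk]; exact hk

lemma measurable_hitT {α : Type*} [MeasurableSpace α] {u : ℝ → α → ℝ}
    (hc : ∀ x, Continuous fun r => u r x) (hm : ∀ r, Measurable (u r)) {ε : ℝ} (hε : 0 < ε)
    (n : ℕ) : Measurable fun x => hitT ε (fun r => u r x) n := by
  have hu : Measurable (Function.uncurry u) :=
    measurable_uncurry_of_continuous_of_measurable hc hm
  induction n with
  | zero => simp only [hitT]; exact measurable_const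
  | succ n ih =>
    refine measurable_of_Iic fun b => ?_
    by_cases hb : b = ∞
    · subst hb; simp
    obtain ⟨a, ha, rfl⟩ : ∃ a : ℝ, 0 ≤ a ∧ b = ENNReal.ofReal a :=
      ⟨b.toReal, ENNReal.toReal_nonneg, (ENNReal.ofReal_toReal hb).symm⟩
    have hTm : Measurable fun x => (hitT ε (fun r => u r x) n).toReal := ih.ennreal_toReal
    have hcomp : ∀ {g : α → ℝ}, Measurable g → Measurable fun x => u (g x) x := fun hg =>
      hu.comp (hg.prodMk measurable_id)
    have heq : (fun x => hitT ε (fun r => u r x) (n + 1)) ⁻¹' Iic (ENNReal.ofReal a) =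
        {x | hitT ε (fun r => u r x) n ≤ ENNReal.ofReal a} ∩
        ⋃ k : ℤ, ({x | ε * k ≠ u (hitT ε (fun r => u r x) n).toReal x} ∩
          ⋂ m : ℕ, ⋃ θ : ℚ, {x | (θ : ℝ) ∈ Icc (0 : ℝ) 1 ∧
            |u ((hitT ε (fun r => u r x) n).toReal +
              θ * (a - (hitT ε (fun r => u r x) n).toReal)) x - ε * k| < 1 / ((m : ℝ) + 1)}) := by
      ext x
      simp only [mem_preimage, mem_Iic, mem_inter_iff, mem_ofPred_eq, mem_iUnion, mem_iInter]
      rw [hitT_succ_le_iff (hc x) hε n ha]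
      refine and_congr_right fun hT => exists_congr fun k => and_congr_right fun _ => ?_
      exact exists_hit_iff (hc x) (ENNReal.toReal_le_of_le_ofReal ha hT)
    rw [heq]
    refine (measurableSet_le ih measurable_const).inter (MeasurableSet.iUnion fun k => ?_)
    refine MeasurableSet.inter ?_ (MeasurableSet.iInter fun m => MeasurableSet.iUnion fun θ => ?_)
    · exact (measurableSet_eq_fun measurable_const (hcomp hTm)).compl
    · rw [ofPred_and]
      refine (MeasurableSet.const _).inter (measurableSet_lt ?_ measurable_const)
      refine ((hcomp ?_).sub_const _).abs
      fun_prop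

lemma measurable_crossKR {α : Type*} [MeasurableSpace α] {u : ℝ → α → ℝ}
    (hc : ∀ x, Continuous fun r => u r x) (hm : ∀ r, Measurable (u r)) {ε : ℝ} (hε : 0 < ε)
    (s t : ℝ) : Measurable fun x => crossKR ε (fun r => u r x) s t := by
  have hT : ∀ n, Measurable fun x => hitT ε (fun r => u (s + r) x) n := fun n =>
    measurable_hitT (u := fun r x => u (s + r) x)
      (fun x => (hc x).comp (continuous_const.add continuous_id)) (fun r => hm _) hε n
  unfold crossKR
  refine Measurable.ennreal_toReal ?_
  have hg : MeasurableSet (lvGrid ε) := by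
    have : lvGrid ε = ⋃ k : ℤ, {ε * (k : ℝ)} := by
      ext x; simp [lvGrid, eq_comm]
    rw [this]
    exact MeasurableSet.iUnion fun k => measurableSet_singleton _
  have heq : (fun x => crossKe ε (fun r => u r x) s t) = fun x =>
      (∑' n : ℕ, if 2 ≤ n ∧ hitT ε (fun r => u (s + r) x) n ≤ ENNReal.ofReal (t - s)
        then (1 : ℝ≥0∞) else 0) +
      (if u s x ∈ lvGrid ε ∧ hitT ε (fun r => u (s + r) x) 1 ≤ ENNReal.ofReal (t - s)
        then 1 else 0) := by
    funext x
    unfold crossKe crossK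
    rw [ENat.toENNReal_add, ← ENNReal.tsum_set_one, tsum_subtype _ (fun _ => (1 : ℝ≥0∞))]
    congr 1
    · refine tsum_congr fun n => ?_
      simp only [indicator_apply, mem_ofPred_eq]
    · split_ifs <;> simp
  rw [heq]
  refine Measurable.add (Measurable.tsum fun n => ?_) ?_
  · refine Measurable.ite ?_ measurable_const measurable_const
    rw [ofPred_and]
    exact (MeasurableSet.const _).inter (measurableSet_le (hT n) measurable_const)
  · refine Measurable.ite ?_ measurable_const measurable_const
    rw [ofPred_and]
    exact (hm s hg).inter (measurableSet_le (hT 1) measurable_const)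

lemma gaussianReal_second_moment {Ω : Type*} [MeasurableSpace Ω] {P : Measure Ω} {Z : Ω → ℝ}
    (hZ : Measurable Z) {v : ℝ≥0} (h : P.map Z = gaussianReal 0 v) :
    MemLp Z 2 P ∧ ∫ ω, Z ω ^ 2 ∂P = v := by
  constructor
  · have h1 : MemLp id 2 (P.map Z) := by
      rw [h]; exact memLp_id_gaussianReal' 2 (by simp)
    exact (memLp_map_measure_iff aestronglyMeasurable_id hZ.aemeasurable).1 h1
  · have h1 : ∫ x, x ^ 2 ∂(P.map Z) = v := by
      rw [h, ← variance_id_gaussianReal (μ := 0) (v := v),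
        variance_of_integral_eq_zero aemeasurable_id (by simp)]
      rfl
    rw [integral_map hZ.aemeasurable (by fun_prop)] at h1
    exact h1

lemma law_eq_of_gaussian {Ω : Type*} [MeasurableSpace Ω] {P : Measure Ω} [IsProbabilityMeasure P]
    {X Y : ℝ → Ω → ℝ} (mX : ∀ t, Measurable (X t)) (mY : ∀ t, Measurable (Y t))
    (gX : ∀ (n : ℕ) (t : Fin n → ℝ) (c : Fin n → ℝ), ∃ v : ℝ≥0,
      Measure.map (fun ω => ∑ i, c i * X (t i) ω) P = gaussianReal 0 v)
    (gY : ∀ (n : ℕ) (t : Fin n → ℝ) (c : Fin n → ℝ), ∃ v : ℝ≥0,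
      Measure.map (fun ω => ∑ i, c i * Y (t i) ω) P = gaussianReal 0 v)
    (X0 : ∀ ω, X 0 ω = 0) (Y0 : ∀ ω, Y 0 ω = 0)
    (hXY : ∀ s t, ∫ ω, (X t ω - X s ω) ^ 2 ∂P = ∫ ω, (Y t ω - Y s ω) ^ 2 ∂P) :
    P.map (fun ω => (X · ω)) = P.map (fun ω => (Y · ω)) := by
  have l2 : ∀ {X : ℝ → Ω → ℝ}, (∀ t, Measurable (X t)) →
      (∀ (n : ℕ) (t : Fin n → ℝ) (c : Fin n → ℝ), ∃ v : ℝ≥0,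
      Measure.map (fun ω => ∑ i, c i * X (t i) ω) P = gaussianReal 0 v) →
      ∀ t, MemLp (X t) 2 P := by
    intro X mX gX t
    obtain ⟨v, hv⟩ := gX 1 (fun _ => t) (fun _ => 1)
    have := (gaussianReal_second_moment (Finset.measurable_sum _ fun i _ => (mX _).const_mul _) hv).1
    simpa using this
  have lX := l2 mX gX
  have lY := l2 mY gY
  have prod : ∀ {X : ℝ → Ω → ℝ}, (∀ t, MemLp (X t) 2 P) → (∀ ω, X 0 ω = 0) → ∀ s t,
      ∫ ω, X s ω * X t ω ∂P = (∫ ω, (X s ω - X 0 ω) ^ 2 ∂P + ∫ ω, (X t ω - X 0 ω) ^ 2 ∂P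
        - ∫ ω, (X t ω - X s ω) ^ 2 ∂P) / 2 := by
    intro X lX X0 s t
    simp only [X0, sub_zero]
    have i1 : Integrable (fun ω => X s ω ^ 2 + X t ω ^ 2) P :=
      (lX s).integrable_sq.add (lX t).integrable_sq
    have i2 : Integrable (fun ω => (X t ω - X s ω) ^ 2) P := ((lX t).sub (lX s)).integrable_sq
    rw [← integral_add (lX s).integrable_sq (lX t).integrable_sq, ← integral_sub i1 i2,
      ← integral_div]
    refine integral_congr_ae (ae_of_all _ fun ω => ?_)
    ring
  have hcov : ∀ s t, ∫ ω, X s ω * X t ω ∂P = ∫ ω, Y s ω * Y t ω ∂P := by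
    intro s t
    rw [prod lX X0, prod lY Y0, hXY, hXY, hXY]
  have sq : ∀ {X : ℝ → Ω → ℝ}, (∀ t, MemLp (X t) 2 P) → ∀ (n : ℕ) (t c : Fin n → ℝ),
      ∫ ω, (∑ i, c i * X (t i) ω) ^ 2 ∂P
        = ∑ i, ∑ j, c i * c j * ∫ ω, X (t i) ω * X (t j) ω ∂P := by
    intro X lX n t c
    have hint : ∀ i j, Integrable (fun ω => c i * c j * (X (t i) ω * X (t j) ω)) P :=
      fun i j => ((lX (t i)).integrable_mul (lX (t j))).const_mul _
    simp only [← integral_const_mul]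
    calc _ = ∫ ω, ∑ i, ∑ j, c i * c j * (X (t i) ω * X (t j) ω) ∂P := by
          refine integral_congr_ae (ae_of_all _ fun ω => ?_)
          simp only [_root_.sq, Finset.sum_mul_sum]
          exact Finset.sum_congr rfl fun i _ => Finset.sum_congr rfl fun j _ => by ring
      _ = _ := by
          rw [integral_finsetSum _ fun i _ => integrable_finsetSum _ fun j _ => hint i j]
          exact Finset.sum_congr rfl fun i _ => integral_finsetSum _ fun j _ => hint i j
  have comb : ∀ (n : ℕ) (t c : Fin n → ℝ), P.map (fun ω => ∑ i, c i * X (t i) ω)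
      = P.map (fun ω => ∑ i, c i * Y (t i) ω) := by
    intro n t c
    obtain ⟨v, hv⟩ := gX n t c
    obtain ⟨v', hv'⟩ := gY n t c
    have h1 := (gaussianReal_second_moment
      (Finset.measurable_sum _ fun i _ => (mX _).const_mul _) hv).2
    have h2 := (gaussianReal_second_moment
      (Finset.measurable_sum _ fun i _ => (mY _).const_mul _) hv').2
    rw [sq lX] at h1
    rw [sq lY] at h2
    simp only [hcov] at h1
    rw [hv, hv', NNReal.coe_injective (h1.symm.trans h2)]
  rw [map_eq_iff_forall_finset_map_restrict_eq (measurable_pi_lambda _ mX).aemeasurable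
    (measurable_pi_lambda _ mY).aemeasurable]
  intro I
  have mXI : Measurable fun ω => I.restrict (X · ω) := measurable_pi_lambda _ fun i => mX _
  have mYI : Measurable fun ω => I.restrict (Y · ω) := measurable_pi_lambda _ fun i => mY _
  have := Measure.isProbabilityMeasure_map (μ := P) mXI.aemeasurable
  have := Measure.isProbabilityMeasure_map (μ := P) mYI.aemeasurable
  refine Measure.ext_of_charFunDual ?_
  ext L
  rw [charFunDual_eq_charFun_map_one, charFunDual_eq_charFun_map_one,
    Measure.map_map (by fun_prop) mXI, Measure.map_map (by fun_prop) mYI]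
  have hL : ∀ Z : ℝ → Ω → ℝ, L ∘ (fun ω => I.restrict (Z · ω)) = fun ω =>
      ∑ i : Fin I.card, L (Pi.single (I.equivFin.symm i) 1) * Z (I.equivFin.symm i) ω := by
    intro Z
    funext ω
    rw [Equiv.sum_comp I.equivFin.symm (fun i => L (Pi.single i 1) * Z i ω)]
    simp only [Function.comp]
    conv_lhs => rw [pi_eq_sum_univ' (I.restrict (Z · ω))]
    rw [map_sum]
    refine Finset.sum_congr rfl fun i _ => ?_
    rw [map_smul, smul_eq_mul, mul_comm]
    congr 2
  rw [hL, hL, comb]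

/-- Path space: continuous functions, with the cylinder sigma-algebra. -/
abbrev CPath : Type := {w : ℝ → ℝ // Continuous w}

lemma law_CPath {Ω : Type*} [MeasurableSpace Ω] {P : Measure Ω}
    {X Y : Ω → CPath} (mX : Measurable X) (mY : Measurable Y)
    (h : P.map (fun ω => (X ω).1) = P.map (fun ω => (Y ω).1)) : P.map X = P.map Y := by
  ext S hS
  obtain ⟨S', hS', rfl⟩ := hS
  have mv : Measurable (Subtype.val : CPath → ℝ → ℝ) := measurable_subtype_coe
  rw [Measure.map_apply mX (mv hS'), Measure.map_apply mY (mv hS')]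
  have h2 : P.map (Subtype.val ∘ X) S' = P.map (Subtype.val ∘ Y) S' := congrArg (fun μ => μ S') h
  rw [Measure.map_apply (mv.comp mX) hS', Measure.map_apply (mv.comp mY) hS'] at h2
  exact h2

/-- **Scaling of `K`.** For every `λ > 0`, the family `(K_{s,t}(ε, B+ρ))_{s<t,ε>0,ρ}` has
the same law as the family `(K_{λ^{1/H} s, λ^{1/H} t}(λε, B+λρ))_{s<t,ε>0,ρ}`. -/
theorem crossK_scaling
    {Ω : Type*} [MeasurableSpace Ω] (P : Measure Ω) [IsProbabilityMeasure P]
    (H : ℝ) (hH : H ∈ Set.Ioo (0 : ℝ) 1) (B : ℝ → Ω → ℝ) (hB : IsFBM H P B)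
    (l : ℝ) (hl : 0 < l) :
    Measure.map (fun ω => fun q : Idx4 =>
        crossKR q.1.2.1 (fun r => B r ω + q.1.2.2) q.1.1.1 q.1.1.2) P
      = Measure.map (fun ω => fun q : Idx4 =>
          crossKR (l * q.1.2.1) (fun r => B r ω + l * q.1.2.2)
            (l ^ (1 / H) * q.1.1.1) (l ^ (1 / H) * q.1.1.2)) P := by

  obtain ⟨hc, h0, hm, hg, aH, -, ha⟩ := hB
  have hcp : 0 < l ^ (1 / H) := Real.rpow_pos_of_pos hl _
  set c := l ^ (1 / H) with hcdef
  have hcH : c ^ (2 * H) = l ^ 2 := by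
    rw [hcdef, ← Real.rpow_mul hl.le, ← Real.rpow_natCast]
    congr 1
    have := hH.1.ne'
    field_simp
    simp
  let Y : ℝ → Ω → ℝ := fun t ω => l⁻¹ * B (c * t) ω
  have hYc : ∀ ω, Continuous fun t => Y t ω := fun ω =>
    continuous_const.mul ((hc ω).comp (continuous_const.mul continuous_id))
  have hYm : ∀ t, Measurable (Y t) := fun t => (hm _).const_mul _
  have hlaw : P.map (fun ω => (B · ω)) = P.map (fun ω => (Y · ω)) := by
    refine law_eq_of_gaussian hm hYm hg ?_ h0 ?_ ?_
    · intro n t d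
      obtain ⟨v, hv⟩ := hg n (fun i => c * t i) (fun i => d i * l⁻¹)
      refine ⟨v, ?_⟩
      rw [← hv]
      simp only [Y, mul_assoc]
    · intro ω
      simp [Y, h0]
    · intro s t
      have e : ∀ ω, (Y t ω - Y s ω) ^ 2 = (l⁻¹) ^ 2 * (B (c * t) ω - B (c * s) ω) ^ 2 := by
        intro ω; simp only [Y]; ring
      simp only [e]
      rw [integral_const_mul, ha, ha, ← mul_sub, abs_mul, abs_of_pos hcp,
        Real.mul_rpow hcp.le (abs_nonneg _), hcH]
      field_simp
  let XB : Ω → CPath := fun ω => ⟨(B · ω), hc ω⟩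
  let XY : Ω → CPath := fun ω => ⟨(Y · ω), hYc ω⟩
  have mXB : Measurable XB := (measurable_pi_lambda _ hm).subtype_mk
  have mXY : Measurable XY := (measurable_pi_lambda _ hYm).subtype_mk
  have hCP : P.map XB = P.map XY := law_CPath mXB mXY hlaw
  let F : CPath → Idx4 → ℝ := fun w q =>
    crossKR q.1.2.1 (fun r => w.1 r + q.1.2.2) q.1.1.1 q.1.1.2
  have mF : Measurable F := by
    refine measurable_pi_lambda _ fun q => ?_
    exact measurable_crossKR (u := fun r (w : CPath) => w.1 r + q.1.2.2)
      (fun w => w.2.add continuous_const)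
      (fun r => ((measurable_pi_apply r).comp measurable_subtype_coe).add_const _) q.2.2 _ _
  have e1 : (fun ω => fun q : Idx4 =>
      crossKR q.1.2.1 (fun r => B r ω + q.1.2.2) q.1.1.1 q.1.1.2) = F ∘ XB := rfl
  have e2 : (fun ω => fun q : Idx4 =>
      crossKR (l * q.1.2.1) (fun r => B r ω + l * q.1.2.2)
        (c * q.1.1.1) (c * q.1.1.2)) = F ∘ XY := by
    funext ω q
    refine crossKR_scale hl hcp (fun r => ?_) _ _
    simp only [XY, Y]
    field_simp
  rw [e1, e2, ← Measure.map_map mF mXB, ← Measure.map_map mF mXY, hCP]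

end
end

section
/- For every H ∈ (0,1), the constant c_H = lim_{t→∞} t^{−1} E[K̄_{0,t}(1,B)] is finite and strictly positive; moreover for every t > 0, |c_H − t^{−1} E[K̄_{0,t}(1,B)]| ≤ t^{−1}. -/
open MeasureTheory ProbabilityTheory Filter Set ENNReal Asymptotics
open scoped NNReal Classical Topology

noncomputable section

/-- The constant `c_H = sup_{t>0} t⁻¹ E[K̄_{0,t}(1,B)] (= lim_{t→∞} t⁻¹ E[K̄_{0,t}(1,B)]`,
the limit existing by superadditivity and Fekete's lemma), as an extended nonnegative real. -/
def cHe {Ω : Type*} [MeasurableSpace Ω] (P : Measure Ω) (B : ℝ → Ω → ℝ) : ℝ≥0∞ :=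
  ⨆ (t : ℝ) (_ : 0 < t), (ENNReal.ofReal t)⁻¹ * ∫⁻ ω, avgK 1 (fun r => B r ω) 0 t ∂P

/-- The constant `c_H` as a real number. -/
def cH {Ω : Type*} [MeasurableSpace Ω] (P : Measure Ω) (B : ℝ → Ω → ℝ) : ℝ :=
  (cHe P B).toReal

/-- `w` visits `m+1` successive grid points, consecutive ones being different, during `[a,b]`. -/
def Chn (w : ℝ → ℝ) (a b : ℝ) (m : ℕ) : Prop :=
  ∃ τ : ℕ → ℝ, (∀ i ≤ m, a ≤ τ i ∧ τ i ≤ b ∧ w (τ i) ∈ lvGrid 1) ∧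
    ∀ i < m, τ i < τ (i + 1) ∧ w (τ i) ≠ w (τ (i + 1))

theorem mem_lvGrid_one {x : ℝ} : x ∈ lvGrid 1 ↔ ∃ k : ℤ, x = k := by
  simp [lvGrid]

theorem isClosed_lvGrid : IsClosed (lvGrid 1) := by
  have : lvGrid 1 = Set.range ((↑) : ℤ → ℝ) := by
    ext x; simp [mem_lvGrid_one, eq_comm]
  rw [this]
  exact Int.isClosedEmbedding_coe_real.isClosed_range

theorem lvGrid_eq_of_close {x y : ℝ} (hx : x ∈ lvGrid 1) (hy : y ∈ lvGrid 1) (h : |x - y| < 1) :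
    x = y := by
  obtain ⟨k, rfl⟩ := mem_lvGrid_one.1 hx
  obtain ⟨l, rfl⟩ := mem_lvGrid_one.1 hy
  have : |k - l| < 1 := by exact_mod_cast h
  have := Int.abs_lt_one_iff.1 this
  have : k = l := by omega
  rw [this]

theorem hitT_lt_step (w : ℝ → ℝ) (n : ℕ) : hitT 1 w n ≤ hitT 1 w (n + 1) := by
  rw [hitT]
  exact le_iInf fun r => le_iInf fun h => h.1.le

theorem hitT_mono (w : ℝ → ℝ) : Monotone (hitT 1 w) := monotone_nat_of_le_succ (hitT_lt_step w)

/-- the infimum in the definition of `hitT` is attained -/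
theorem hitT_attained {w : ℝ → ℝ} (hw : Continuous w) (n : ℕ) (h : hitT 1 w (n + 1) ≠ ⊤) :
    hitT 1 w n < hitT 1 w (n + 1) ∧ w (hitT 1 w (n + 1)).toReal ∈ lvGrid 1 ∧
      w (hitT 1 w (n + 1)).toReal ≠ w (hitT 1 w n).toReal := by
  set T := hitT 1 w n with hT
  have hle : T ≤ hitT 1 w (n + 1) := hitT_lt_step w n
  have hTt : T ≠ ⊤ := ne_top_of_le_ne_top h hle
  set S : Set ℝ := {r | T < ENNReal.ofReal r ∧ w r ∈ lvGrid 1 ∧ w r ≠ w T.toReal} with hS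
  set R := (hitT 1 w (n + 1)).toReal with hR
  have hRe : ENNReal.ofReal R = hitT 1 w (n + 1) := ENNReal.ofReal_toReal h
  have hlow : ∀ r ∈ S, R ≤ r := by
    intro r hr
    have h1 : hitT 1 w (n + 1) ≤ ENNReal.ofReal r := by
      rw [hitT]; exact iInf₂_le r hr
    have h2 : 0 < r := by
      have := lt_of_le_of_lt bot_le hr.1
      simpa using this
    rw [← hRe] at h1
    exact (ENNReal.ofReal_le_ofReal_iff h2.le).1 h1
  have happ : ∀ δ > 0, ∃ r ∈ S, r < R + δ := by
    intro δ hδ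
    by_contra hcon
    push Not at hcon
    have : ENNReal.ofReal (R + δ) ≤ hitT 1 w (n + 1) := by
      conv_rhs => rw [hitT]
      exact le_iInf fun r => le_iInf fun h => ENNReal.ofReal_le_ofReal (hcon r h)
    rw [← hRe, ENNReal.ofReal_le_ofReal_iff ENNReal.toReal_nonneg] at this
    linarith
  have hcl : R ∈ closure S := by
    rw [Metric.mem_closure_iff]
    intro δ hδ
    obtain ⟨r, hr, hr2⟩ := happ δ hδ
    refine ⟨r, hr, ?_⟩
    rw [Real.dist_eq, abs_lt]
    have := hlow r hr
    constructor <;> linarith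
  have hg : w R ∈ lvGrid 1 := by
    have : closure S ⊆ w ⁻¹' (lvGrid 1) :=
      closure_minimal (fun r hr => hr.2.1) (isClosed_lvGrid.preimage hw)
    exact this hcl
  obtain ⟨δ, hδ, hδ2⟩ := Metric.continuous_iff.1 hw R 1 one_pos
  obtain ⟨r, hr, hr2⟩ := happ δ hδ
  have hwr : w r = w R := by
    apply lvGrid_eq_of_close hr.2.1 hg
    rw [← Real.dist_eq]
    apply hδ2
    rw [Real.dist_eq, abs_lt]
    have := hlow r hr
    constructor <;> linarith
  have hne : w R ≠ w T.toReal := hwr ▸ hr.2.2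
  refine ⟨lt_of_le_of_ne hle fun heq => hne ?_, hg, hne⟩
  rw [hR, ← heq]

/-- index shift: `0` if we start on the grid, `1` otherwise -/
def sh (w : ℝ → ℝ) : ℕ := if w 0 ∈ lvGrid 1 then 0 else 1

theorem hit_le_of_chain {w : ℝ → ℝ} (m : ℕ) {τ : ℕ → ℝ}
    (h1 : ∀ i ≤ m, 0 ≤ τ i ∧ w (τ i) ∈ lvGrid 1)
    (h2 : ∀ i < m, τ i < τ (i + 1) ∧ w (τ i) ≠ w (τ (i + 1))) :
    ∀ i ≤ m, hitT 1 w (i + sh w) ≤ ENNReal.ofReal (τ i) := by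
  intro i
  induction i with
  | zero =>
    intro hi
    by_cases h0 : w 0 ∈ lvGrid 1
    · simp [sh, h0, hitT]
    · simp only [sh, h0, if_false, zero_add]
      rw [hitT]
      have hne : w (τ 0) ≠ w 0 := fun h => h0 (h ▸ (h1 0 hi).2)
      refine iInf₂_le (τ 0) ⟨?_, (h1 0 hi).2, ?_⟩
      · simp only [hitT, ENNReal.ofReal_pos]
        refine lt_of_le_of_ne (h1 0 hi).1 fun h => hne (by rw [← h])
      · simpa [hitT] using hne
  | succ i ih =>
    intro hi
    have ih := ih (by omega)
    have hτ := h2 i (by omega)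
    have hi0 := h1 i (by omega)
    have hi1 := h1 (i + 1) hi
    set T := hitT 1 w (i + sh w) with hT
    have hTt : T ≠ ⊤ := ne_top_of_le_ne_top ENNReal.ofReal_ne_top ih
    have e : i + 1 + sh w = (i + sh w) + 1 := by omega
    rw [e, hitT, ← hT]
    have hlt : ENNReal.ofReal (τ i) < ENNReal.ofReal (τ (i + 1)) :=
      (ENNReal.ofReal_lt_ofReal_iff (by linarith [hτ.1])).2 hτ.1
    by_cases hc : w (τ (i + 1)) = w T.toReal
    · have hne : w (τ i) ≠ w T.toReal := fun h => hτ.2 (h.trans hc.symm)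
      refine (iInf₂_le (τ i) ⟨lt_of_le_of_ne ih fun h => hne ?_, hi0.2, hne⟩).trans hlt.le
      rw [h, ENNReal.toReal_ofReal hi0.1]
    · exact iInf₂_le (τ (i + 1)) ⟨ih.trans_lt hlt, hi1.2, hc⟩

theorem chain_iff_hit {w : ℝ → ℝ} (hw : Continuous w) {b : ℝ} (hb : 0 ≤ b) (m : ℕ) :
    Chn w 0 b m ↔ hitT 1 w (m + sh w) ≤ ENNReal.ofReal b := by
  constructor
  · rintro ⟨τ, h1, h2⟩
    exact (hit_le_of_chain m (fun i hi => ⟨(h1 i hi).1, (h1 i hi).2.2⟩) h2 m le_rfl).trans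
      (ENNReal.ofReal_le_ofReal (h1 m le_rfl).2.1)
  · intro h
    have hle : ∀ i ≤ m, hitT 1 w (i + sh w) ≤ ENNReal.ofReal b := fun i hi =>
      (hitT_mono w (by omega)).trans h
    have htop : ∀ i ≤ m, hitT 1 w (i + sh w) ≠ ⊤ := fun i hi =>
      ne_top_of_le_ne_top ENNReal.ofReal_ne_top (hle i hi)
    refine ⟨fun i => (hitT 1 w (i + sh w)).toReal, fun i hi => ⟨ENNReal.toReal_nonneg, ?_, ?_⟩, ?_⟩
    · exact ENNReal.toReal_le_of_le_ofReal hb (hle i hi)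
    · cases i with
      | zero =>
        by_cases h0 : w 0 ∈ lvGrid 1
        · simp [sh, h0, hitT]
        · have := htop 0 (by omega)
          simp only [sh, h0, if_false, zero_add] at this ⊢
          exact (hitT_attained hw 0 this).2.1
      | succ i =>
        have e : i + 1 + sh w = (i + sh w) + 1 := by omega
        have := htop (i + 1) hi
        simp only [e] at this ⊢
        exact (hitT_attained hw _ this).2.1
    · intro i hi
      have e : i + 1 + sh w = (i + sh w) + 1 := by omega
      have := htop (i + 1) hi
      simp only [e] at this ⊢
      have h3 := hitT_attained hw _ this
      exact ⟨(ENNReal.toReal_lt_toReal (htop i (by omega)) this).2 h3.1, h3.2.2.symm⟩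

theorem le_encard_iff {p : ℕ → Prop} (hp : ∀ i j, i ≤ j → p j → p i) (m : ℕ) :
    ((m + 1 : ℕ) : ℕ∞) ≤ {n : ℕ | 2 ≤ n ∧ p n}.encard ↔ p (m + 2) := by
  constructor
  · intro h
    by_contra hc
    have hsub : {n : ℕ | 2 ≤ n ∧ p n} ⊆ (Finset.Ico 2 (m + 2) : Finset ℕ) := by
      rintro n ⟨h2, hn⟩
      simp only [Finset.coe_Ico, Set.mem_Ico]
      exact ⟨h2, by by_contra h3; exact hc (hp _ _ (by omega) hn)⟩
    have := h.trans (Set.encard_le_encard hsub)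
    rw [Set.encard_coe_eq_coe_finsetCard, Nat.card_Ico] at this
    have := Nat.cast_le.1 this
    omega
  · intro h
    have hsub : ((Finset.Ico 2 (m + 3) : Finset ℕ) : Set ℕ) ⊆ {n : ℕ | 2 ≤ n ∧ p n} := by
      intro n hn
      simp only [Finset.coe_Ico, Set.mem_Ico] at hn
      exact ⟨hn.1, hp _ _ (by omega) h⟩
    have := Set.encard_le_encard hsub
    rw [Set.encard_coe_eq_coe_finsetCard, Nat.card_Ico] at this
    exact this

theorem Chn_shift (w : ℝ → ℝ) (s a b : ℝ) (m : ℕ) :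
    Chn (fun r => w (s + r)) a b m ↔ Chn w (s + a) (s + b) m := by
  constructor
  · rintro ⟨τ, h1, h2⟩
    refine ⟨fun i => s + τ i, fun i hi => ⟨?_, ?_, (h1 i hi).2.2⟩, fun i hi => ⟨?_, (h2 i hi).2⟩⟩
    · linarith [(h1 i hi).1]
    · linarith [(h1 i hi).2.1]
    · linarith [(h2 i hi).1]
  · rintro ⟨τ, h1, h2⟩
    refine ⟨fun i => τ i - s, fun i hi => ⟨?_, ?_, ?_⟩, fun i hi => ⟨?_, ?_⟩⟩
    · linarith [(h1 i hi).1]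
    · linarith [(h1 i hi).2.1]
    · simpa using (h1 i hi).2.2
    · linarith [(h2 i hi).1]
    · simpa using (h2 i hi).2

theorem le_crossK_iff {w : ℝ → ℝ} (hw : Continuous w) {s t : ℝ} (hst : s ≤ t) (m : ℕ) :
    ((m + 1 : ℕ) : ℕ∞) ≤ crossK 1 w s t ↔ Chn w s t (m + 1) := by
  have hw' : Continuous (fun r => w (s + r)) := by fun_prop
  have e : Chn w s t (m + 1) ↔ Chn (fun r => w (s + r)) 0 (t - s) (m + 1) := by
    rw [Chn_shift]; simp
  rw [e, chain_iff_hit hw' (by linarith), crossK]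
  set v := fun r => w (s + r) with hv
  have hp : ∀ i j, i ≤ j → hitT 1 v j ≤ ENNReal.ofReal (t - s) →
      hitT 1 v i ≤ ENNReal.ofReal (t - s) := fun i j hij h => (hitT_mono v hij).trans h
  have hv0 : v 0 = w s := by simp [hv]
  by_cases h0 : w s ∈ lvGrid 1
  · have hsh : sh v = 0 := by simp [sh, hv0, h0]
    rw [hsh]
    by_cases h1 : hitT 1 v 1 ≤ ENNReal.ofReal (t - s)
    · simp only [h0, h1, and_self, if_true]
      cases m with
      | zero => simpa using h1
      | succ m =>
        rw [← le_encard_iff hp m]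
        push_cast
        exact ENat.add_le_add_iff_right ENat.one_ne_top
    · have h2 : ¬ hitT 1 v (m + 1 + 0) ≤ ENNReal.ofReal (t - s) := fun h => h1 (hp _ _ (by omega) h)
      simp only [h0, h1, h2, and_false, if_false, iff_false, add_zero]
      have : {n | 2 ≤ n ∧ hitT 1 v n ≤ ENNReal.ofReal (t - s)} = ∅ := by
        ext n
        simp only [Set.mem_ofPred_eq, Set.mem_empty_iff_false, iff_false]
        rintro ⟨h3, h4⟩
        exact h1 (hp _ _ (by omega) h4)
      rw [this]
      simp
  · have hsh : sh v = 1 := by simp [sh, hv0, h0]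
    rw [hsh]
    simp only [h0, false_and, if_false, add_zero]
    exact le_encard_iff hp m
theorem Chn.mono {w : ℝ → ℝ} {a a' b b' : ℝ} {m m' : ℕ} (ha : a' ≤ a) (hb : b ≤ b')
    (hm : m' ≤ m) (h : Chn w a b m) : Chn w a' b' m' := by
  obtain ⟨τ, h1, h2⟩ := h
  exact ⟨τ, fun i hi => ⟨ha.trans (h1 i (hi.trans hm)).1, (h1 i (hi.trans hm)).2.1.trans hb,
    (h1 i (hi.trans hm)).2.2⟩, fun i hi => h2 i (hi.trans_le hm)⟩

theorem crossK_le_iff {x y : ℕ∞} :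
    x ≤ y ↔ ∀ m : ℕ, ((m + 1 : ℕ) : ℕ∞) ≤ x → ((m + 1 : ℕ) : ℕ∞) ≤ y := by
  constructor
  · exact fun h m hm => hm.trans h
  · intro h
    rw [← ENat.forall_natCast_le_iff_le]
    intro a ha
    cases a with
    | zero => simp
    | succ a => exact h a ha

theorem crossK_mono {w : ℝ → ℝ} (hw : Continuous w) {a a' b b' : ℝ} (hab : a ≤ b)
    (ha : a' ≤ a) (hb : b ≤ b') : crossK 1 w a b ≤ crossK 1 w a' b' := by
  rw [crossK_le_iff]
  intro m hm
  rw [le_crossK_iff hw (by linarith)]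
  rw [le_crossK_iff hw hab] at hm
  exact hm.mono ha hb le_rfl

theorem Chn.trans {w : ℝ → ℝ} {a b c : ℝ} {m n : ℕ}
    (h : Chn w a b m) (h' : Chn w b c n) : Chn w a c (m + n) := by
  obtain ⟨p, p1, p2⟩ := h
  obtain ⟨q, q1, q2⟩ := h'
  have hpq : ∀ i ≤ m, ∀ j ≤ n, p i ≤ q j := fun i hi j hj =>
    (p1 i hi).2.1.trans (q1 j hj).1
  have hab : a ≤ b := (p1 0 (by omega)).1.trans (p1 0 (by omega)).2.1
  have hbc : b ≤ c := (q1 0 (by omega)).1.trans (q1 0 (by omega)).2.1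
  by_cases hc : w (p m) = w (q 0)
  · refine ⟨fun i => if i ≤ m then p i else q (i - m), ?_, ?_⟩
    · intro i hi
      by_cases him : i ≤ m
      · simp only [him, if_true]
        exact ⟨(p1 i him).1, (p1 i him).2.1.trans hbc, (p1 i him).2.2⟩
      · simp only [him, if_false]
        have := q1 (i - m) (by omega)
        exact ⟨hab.trans this.1, this.2⟩
    · intro i hi
      rcases lt_trichotomy i m with him | him | him
      · have e1 : i ≤ m := him.le
        have e2 : i + 1 ≤ m := him
        simp only [e1, e2, if_true]
        exact p2 i him
      · subst him
        have e2 : ¬ (i + 1 ≤ i) := by omega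
        have e3 : i + 1 - i = 0 + 1 := by omega
        simp only [le_refl, e2, if_true, if_false, e3]
        rw [hc]
        exact ⟨(hpq i le_rfl 0 (by omega)).trans_lt (q2 0 (by omega)).1, (q2 0 (by omega)).2⟩
      · have e1 : ¬ i ≤ m := by omega
        have e2 : ¬ i + 1 ≤ m := by omega
        have e3 : i + 1 - m = (i - m) + 1 := by omega
        simp only [e1, e2, if_false, e3]
        exact q2 _ (by omega)
  · refine ⟨fun i => if i ≤ m then p i else q (i - m - 1), ?_, ?_⟩
    · intro i hi
      by_cases him : i ≤ m
      · simp only [him, if_true]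
        exact ⟨(p1 i him).1, (p1 i him).2.1.trans hbc, (p1 i him).2.2⟩
      · simp only [him, if_false]
        have := q1 (i - m - 1) (by omega)
        exact ⟨hab.trans this.1, this.2⟩
    · intro i hi
      rcases lt_trichotomy i m with him | him | him
      · have e1 : i ≤ m := him.le
        have e2 : i + 1 ≤ m := him
        simp only [e1, e2, if_true]
        exact p2 i him
      · subst him
        have e2 : ¬ (i + 1 ≤ i) := by omega
        have e3 : i + 1 - i - 1 = 0 := by omega
        simp only [le_refl, e2, if_true, if_false, e3]
        exact ⟨lt_of_le_of_ne (hpq i le_rfl 0 (by omega)) fun h => hc (by rw [h]), hc⟩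
      · have e1 : ¬ i ≤ m := by omega
        have e2 : ¬ i + 1 ≤ m := by omega
        have e3 : i + 1 - m - 1 = (i - m - 1) + 1 := by omega
        simp only [e1, e2, if_false, e3]
        exact q2 _ (by omega)

theorem crossK_super {w : ℝ → ℝ} (hw : Continuous w) {a b c : ℝ} (hab : a ≤ b) (hbc : b ≤ c) :
    crossK 1 w a b + crossK 1 w b c ≤ crossK 1 w a c := by
  have key : ∀ m n : ℕ, (m : ℕ∞) ≤ crossK 1 w a b → (n : ℕ∞) ≤ crossK 1 w b c →
      ((m + n : ℕ) : ℕ∞) ≤ crossK 1 w a c := by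
    intro m n hm hn
    cases m with
    | zero => simpa using hn.trans (crossK_mono hw hbc hab le_rfl)
    | succ m =>
      cases n with
      | zero => simpa using hm.trans (crossK_mono hw hab le_rfl hbc)
      | succ n =>
        rw [le_crossK_iff hw hab] at hm
        rw [le_crossK_iff hw hbc] at hn
        have := hm.trans hn
        have e : m + 1 + (n + 1) = (m + n + 1) + 1 := by omega
        rw [e] at this ⊢
        rwa [le_crossK_iff hw (hab.trans hbc)]
  have key2 : ∀ x y z : ℕ∞, (∀ m n : ℕ, (m : ℕ∞) ≤ x → (n : ℕ∞) ≤ y → ((m + n : ℕ) : ℕ∞) ≤ z) →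
      x + y ≤ z := by
    intro x y z h
    have htop : ∀ x z : ℕ∞, (∀ m : ℕ, (m : ℕ∞) ≤ x → (m : ℕ∞) ≤ z) → x ≤ z :=
      fun x z h => ENat.forall_natCast_le_iff_le.1 h
    induction x with
    | top =>
      have : (⊤ : ℕ∞) ≤ z := htop _ _ fun m hm => by simpa using h m 0 hm (by simp)
      simpa using this
    | coe x =>
      induction y with
      | top =>
        have : (⊤ : ℕ∞) ≤ z := htop _ _ fun m hm => by simpa using h 0 m (by simp) hm
        simpa using this
      | coe y => exact_mod_cast h x y le_rfl le_rfl
  exact key2 _ _ _ key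

theorem Chn.split {w : ℝ → ℝ} {a b c : ℝ} {m : ℕ} (h : Chn w a c m) :
    Chn w a b m ∨ Chn w b c m ∨ ∃ i j, i + j + 1 = m ∧ Chn w a b i ∧ Chn w b c j := by
  obtain ⟨p, p1, p2⟩ := h
  have hmono : ∀ i j, i ≤ j → j ≤ m → p i ≤ p j := by
    intro i j hij
    induction j, hij using Nat.le_induction with
    | base => intro _; exact le_rfl
    | succ j hij ih => intro hj; exact (ih (by omega)).trans (p2 j (by omega)).1.le
  by_cases hA : ∃ i ≤ m, b < p i
  · have hex : ∃ i, b < p i := let ⟨i, _, h⟩ := hA; ⟨i, h⟩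
    set k := Nat.find hex with hk
    have hk1 : b < p k := Nat.find_spec hex
    have hkm : k ≤ m := by
      obtain ⟨i, hi, h⟩ := hA
      exact (Nat.find_min' hex h).trans hi
    rcases Nat.eq_zero_or_pos k with h0 | h0
    · right; left
      refine ⟨p, fun i hi => ⟨?_, (p1 i hi).2⟩, p2⟩
      rw [h0] at hk1
      exact hk1.le.trans (hmono 0 i (by omega) hi)
    · right; right
      refine ⟨k - 1, m - k, by omega, ⟨p, fun i hi => ⟨(p1 i (by omega)).1, ?_,
        (p1 i (by omega)).2.2⟩, fun i hi => p2 i (by omega)⟩,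
        ⟨fun i => p (k + i), fun i hi => ⟨hk1.le.trans (hmono _ _ (by omega) (by omega)),
        (p1 _ (by omega)).2⟩, fun i hi => p2 _ (by omega)⟩⟩
      have : ¬ b < p i := Nat.find_min hex (by omega)
      exact not_lt.1 this
  · left
    push Not at hA
    exact ⟨p, fun i hi => ⟨(p1 i hi).1, hA i hi, (p1 i hi).2.2⟩, p2⟩

theorem Chn.le_crossK {w : ℝ → ℝ} (hw : Continuous w) {a b : ℝ} {m : ℕ} (hab : a ≤ b)
    (h : Chn w a b m) : (m : ℕ∞) ≤ crossK 1 w a b := by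
  cases m with
  | zero => simp
  | succ m => exact (le_crossK_iff hw hab m).2 h

theorem crossK_sub {w : ℝ → ℝ} (hw : Continuous w) {a b c : ℝ} (hab : a ≤ b) (hbc : b ≤ c) :
    crossK 1 w a c ≤ crossK 1 w a b + crossK 1 w b c + 1 := by
  rw [crossK_le_iff]
  intro m hm
  rw [le_crossK_iff hw (hab.trans hbc)] at hm
  rcases hm.split (b := b) with h | h | ⟨i, j, hij, h, h'⟩
  · exact (h.le_crossK hw hab).trans (le_self_add.trans le_self_add)
  · exact (h.le_crossK hw hbc).trans (le_add_self.trans le_self_add)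
  · rw [← hij]
    push_cast
    gcongr
    · exact h.le_crossK hw hab
    · exact h'.le_crossK hw hbc

theorem crossK_eq_zero {w : ℝ → ℝ} (hw : Continuous w) {a b : ℝ} (hab : a ≤ b)
    (h : ∀ x ∈ Set.Icc a b, ∀ y ∈ Set.Icc a b, |w x - w y| < 1) : crossK 1 w a b = 0 := by
  by_contra hc
  have h1 : ((0 + 1 : ℕ) : ℕ∞) ≤ crossK 1 w a b := by
    simpa using Order.one_le_iff_ne_zero.2 hc
  rw [le_crossK_iff hw hab] at h1
  obtain ⟨p, p1, p2⟩ := h1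
  have h0 := p1 0 (by omega)
  have h1 := p1 1 (by omega)
  exact (p2 0 (by omega)).2 (lvGrid_eq_of_close h0.2.2 h1.2.2
    (h _ ⟨h0.1, h0.2.1⟩ _ ⟨h1.1, h1.2.1⟩))

theorem lvGrid_add_int {x : ℝ} (k : ℤ) : x + k ∈ lvGrid 1 ↔ x ∈ lvGrid 1 := by
  simp only [mem_lvGrid_one]
  constructor
  · rintro ⟨l, hl⟩; exact ⟨l - k, by push_cast; linarith⟩
  · rintro ⟨l, hl⟩; exact ⟨l + k, by push_cast; linarith⟩

theorem crossK_add_int {w : ℝ → ℝ} (hw : Continuous w) {a b : ℝ} (hab : a ≤ b) (k : ℤ) :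
    crossK 1 (fun r => w r + k) a b = crossK 1 w a b := by
  have hw' : Continuous (fun r => w r + k) := by fun_prop
  have : ∀ m, Chn (fun r => w r + k) a b m ↔ Chn w a b m := by
    intro m
    simp only [Chn, lvGrid_add_int, ne_eq, _root_.add_left_inj]
  apply le_antisymm <;> rw [crossK_le_iff] <;> intro m <;>
    rw [le_crossK_iff hw hab, le_crossK_iff hw' hab, this] <;> exact id

theorem one_le_crossK {w : ℝ → ℝ} (hw : Continuous w) {a b : ℝ} (hab : a ≤ b)
    (h : 2 ≤ |w b - w a|) : 1 ≤ crossK 1 w a b := by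
  have hiv : ∀ k : ℤ, (k : ℝ) ∈ Set.uIcc (w a) (w b) → ∃ x ∈ Set.Icc a b, w x = k := by
    intro k hk
    have := intermediate_value_uIcc (f := w) (a := a) (b := b) hw.continuousOn hk
    rw [Set.uIcc_of_le hab] at this
    exact this
  -- two consecutive integers between the end values
  obtain ⟨k, h1, h2⟩ : ∃ k : ℤ, (k : ℝ) ∈ Set.uIcc (w a) (w b) ∧
      ((k + 1 : ℤ) : ℝ) ∈ Set.uIcc (w a) (w b) := by
    refine ⟨⌈min (w a) (w b)⌉, ?_⟩
    have hc1 := Int.le_ceil (min (w a) (w b))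
    have hc2 := Int.ceil_lt_add_one (min (w a) (w b))
    have hmm : max (w a) (w b) - min (w a) (w b) = |w b - w a| := by
      rw [max_sub_min_eq_abs]
    simp only [Set.uIcc, Set.mem_Icc]
    push_cast
    refine ⟨⟨hc1, ?_⟩, ?_, ?_⟩
    · change _ ≤ max (w a) (w b); linarith
    · change min (w a) (w b) ≤ _; linarith
    · change _ ≤ max (w a) (w b); linarith
  obtain ⟨x, hx, hxk⟩ := hiv k h1
  obtain ⟨y, hy, hyk⟩ := hiv (k + 1) h2
  have hxg : w x ∈ lvGrid 1 := mem_lvGrid_one.2 ⟨k, hxk⟩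
  have hyg : w y ∈ lvGrid 1 := mem_lvGrid_one.2 ⟨k + 1, hyk⟩
  have hne : w x ≠ w y := by rw [hxk, hyk]; push_cast; linarith
  have main : ∀ x y, x ∈ Set.Icc a b → y ∈ Set.Icc a b → w x ∈ lvGrid 1 → w y ∈ lvGrid 1 →
      w x ≠ w y → x < y → 1 ≤ crossK 1 w a b := by
    intro x y hx hy hxg hyg hne hlt
    have : Chn w a b 1 := by
      refine ⟨fun i => if i = 0 then x else y, ?_, ?_⟩
      · intro i _
        by_cases hi : i = 0
        · simp only [hi, if_true]; exact ⟨hx.1, hx.2, hxg⟩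
        · simp only [hi, if_false]; exact ⟨hy.1, hy.2, hyg⟩
      · intro i hi
        have : i = 0 := by omega
        subst this
        simpa using ⟨hlt, hne⟩
    simpa using this.le_crossK hw hab
  rcases lt_trichotomy x y with h | h | h
  · exact main x y hx hy hxg hyg hne h
  · exact absurd (by rw [h]) hne
  · exact main y x hy hx hyg hxg hne.symm h
/-- a countable description of chains -/
def FK (t : ℝ) (v : ℝ → ℝ) (m : ℕ) : Prop :=
  ∃ k : Fin (m + 1) → ℤ, (∀ i : Fin m, k i.castSucc ≠ k i.succ) ∧
    ∀ n : ℕ, ∃ q : Fin (m + 1) → ℚ, (Monotone q ∧ ∀ i, 0 ≤ q i ∧ q i ≤ 1) ∧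
      ∀ i, |v (t * q i) - k i| < 1 / ((n : ℝ) + 1)

theorem Chn_iff_FK {v : ℝ → ℝ} (hv : Continuous v) {t : ℝ} (ht : 0 < t) (m : ℕ) :
    Chn v 0 t m ↔ FK t v m := by
  constructor
  · rintro ⟨p, p1, p2⟩
    have hmono : ∀ i j, i ≤ j → j ≤ m → p i ≤ p j := by
      intro i j hij
      induction j, hij using Nat.le_induction with
      | base => intro _; exact le_rfl
      | succ j hij ih => intro hj; exact (ih (by omega)).trans (p2 j (by omega)).1.le
    have hk : ∀ i : Fin (m + 1), ∃ k : ℤ, v (p i) = k := fun i =>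
      mem_lvGrid_one.1 (p1 i (by omega)).2.2
    choose k hk using hk
    refine ⟨k, fun i h => ?_, fun n => ?_⟩
    · apply (p2 i i.2).2
      have h1 := hk i.castSucc
      have h2 := hk i.succ
      rw [Fin.val_castSucc] at h1
      rw [Fin.val_succ] at h2
      rw [h1, h2, h]
    · have hx0 : ∀ i : Fin (m + 1), 0 ≤ p i / t := fun i =>
        div_nonneg (p1 i (by omega)).1 ht.le
      have hx1 : ∀ i : Fin (m + 1), p i / t ≤ 1 := fun i =>
        (div_le_one ht).2 (p1 i (by omega)).2.1
      have hlim : ∀ i : Fin (m + 1), ∀ᶠ N : ℕ in atTop,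
          |v (t * ((⌊p i / t * (N : ℝ)⌋₊ : ℝ) / (N : ℝ))) - k i| < 1 / ((n : ℝ) + 1) := by
        intro i
        have h1 : Tendsto (fun N : ℕ => (⌊p i / t * (N : ℝ)⌋₊ : ℝ) / (N : ℝ)) atTop
            (𝓝 (p i / t)) :=
          (tendsto_nat_floor_mul_div_atTop (hx0 i)).comp tendsto_natCast_atTop_atTop
        have h2 : Tendsto (fun N : ℕ => v (t * ((⌊p i / t * (N : ℝ)⌋₊ : ℝ) / (N : ℝ)))) atTop
            (𝓝 (v (t * (p i / t)))) := (hv.tendsto _).comp (h1.const_mul t)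
        rw [mul_div_cancel₀ _ ht.ne', hk i] at h2
        have h3 := Metric.tendsto_atTop.1 h2 (1 / ((n : ℝ) + 1)) (by positivity)
        obtain ⟨N, hN⟩ := h3
        exact eventually_atTop.2 ⟨N, fun N' h => by simpa [Real.dist_eq] using hN N' h⟩
      obtain ⟨N, hN, hN0⟩ := ((eventually_all.2 hlim).and (eventually_gt_atTop 0)).exists
      have hNr : (0 : ℝ) < N := by exact_mod_cast hN0
      have hNq : (0 : ℚ) < N := by exact_mod_cast hN0
      refine ⟨fun i => (⌊p i / t * (N : ℝ)⌋₊ : ℚ) / (N : ℚ), ⟨?_, fun i => ⟨by positivity, ?_⟩⟩, ?_⟩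
      · intro i j hij
        simp only
        gcongr
        exact hmono i j hij (by omega)
      · rw [div_le_one hNq]
        have : ⌊p i / t * (N : ℝ)⌋₊ ≤ N := by
          apply Nat.floor_le_of_le
          nlinarith [hx1 i]
        exact_mod_cast this
      · intro i
        have := hN i
        push_cast
        exact this
  · rintro ⟨k, hk, hq⟩
    choose q hq1 hq2 using hq
    have hcomp : IsCompact (Set.Icc (0 : Fin (m + 1) → ℝ) 1) := isCompact_Icc
    have hmem : ∀ n, (fun i => (q n i : ℝ)) ∈ Set.Icc (0 : Fin (m + 1) → ℝ) 1 := by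
      intro n
      constructor
      · intro i; simp only [Pi.zero_apply]; exact_mod_cast ((hq1 n).2 i).1
      · intro i; simp only [Pi.one_apply]; exact_mod_cast ((hq1 n).2 i).2
    obtain ⟨x, hx, φ, hφ, hlim⟩ := hcomp.tendsto_subseq hmem
    have hlim' : ∀ i, Tendsto (fun n => (q (φ n) i : ℝ)) atTop (𝓝 (x i)) := fun i =>
      (tendsto_pi_nhds.1 hlim) i
    have hxm : ∀ i j, i ≤ j → x i ≤ x j := fun i j hij =>
      le_of_tendsto_of_tendsto' (hlim' i) (hlim' j) fun n => by exact_mod_cast (hq1 (φ n)).1 hij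
    have hval : ∀ i, v (t * x i) = k i := by
      intro i
      have h1 : Tendsto (fun n => v (t * q (φ n) i)) atTop (𝓝 (v (t * x i))) :=
        (hv.tendsto _).comp ((hlim' i).const_mul t)
      have h2 : Tendsto (fun n => v (t * q (φ n) i)) atTop (𝓝 (k i : ℝ)) := by
        rw [tendsto_iff_dist_tendsto_zero]
        have h3 : Tendsto (fun n : ℕ => 1 / (((φ n : ℕ) : ℝ) + 1)) atTop (𝓝 0) :=
          tendsto_one_div_add_atTop_nhds_zero_nat.comp hφ.tendsto_atTop
        exact squeeze_zero (fun n => dist_nonneg)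
          (fun n => by rw [Real.dist_eq]; exact (hq2 (φ n) i).le) h3
      exact tendsto_nhds_unique h1 h2
    refine ⟨fun i => if h : i < m + 1 then t * x ⟨i, h⟩ else 0, ?_, ?_⟩
    · intro i hi
      have h : i < m + 1 := by omega
      simp only [h, dite_true]
      refine ⟨mul_nonneg ht.le (hx.1 _), ?_, mem_lvGrid_one.2 ⟨_, hval _⟩⟩
      have := hx.2 ⟨i, h⟩
      simp only [Pi.one_apply] at this
      nlinarith
    · intro i hi
      have h : i < m + 1 := by omega
      have h' : i + 1 < m + 1 := by omega
      simp only [h, h', dite_true]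
      have hne : v (t * x ⟨i, h⟩) ≠ v (t * x ⟨i + 1, h'⟩) := by
        rw [hval, hval]
        have := hk ⟨i, hi⟩
        exact_mod_cast this
      refine ⟨lt_of_le_of_ne ?_ fun h => hne (by rw [h]), hne⟩
      have := hxm ⟨i, h⟩ ⟨i + 1, h'⟩ (by simp)
      gcongr

/-- countable description of the crossing count on `[0,t]` -/
def Fe (t : ℝ) (v : ℝ → ℝ) : ℝ≥0∞ :=
  ⨆ m : ℕ, if FK t v (m + 1) then ((m + 1 : ℕ) : ℝ≥0∞) else 0

theorem crossKe_eq_Fe {v : ℝ → ℝ} (hv : Continuous v) {t : ℝ} (ht : 0 < t) :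
    crossKe 1 v 0 t = Fe t v := by
  have key : ∀ m : ℕ, FK t v (m + 1) ↔ ((m + 1 : ℕ) : ℕ∞) ≤ crossK 1 v 0 t := fun m => by
    rw [← Chn_iff_FK hv ht, le_crossK_iff hv ht.le]
  simp only [crossKe, Fe, key]
  generalize crossK 1 v 0 t = K
  apply le_antisymm
  · induction K with
    | top =>
      simp only [le_top, if_true, ENat.toENNReal_top, top_le_iff]
      apply ENNReal.eq_top_of_forall_nnreal_le
      intro r
      obtain ⟨n, hn⟩ := exists_nat_ge r
      refine le_trans ?_ (le_iSup _ n)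
      have : (r : ℝ≥0∞) ≤ n := by exact_mod_cast hn
      exact this.trans (by push_cast; exact le_self_add)
    | coe n =>
      cases n with
      | zero => simp
      | succ n =>
        refine le_trans ?_ (le_iSup _ n)
        simp
  · refine iSup_le fun m => ?_
    split_ifs with h
    · have := ENat.toENNReal_le.2 h
      simpa using this
    · exact bot_le

theorem measurable_Fe (t : ℝ) :
    Measurable (fun p : (ℝ → ℝ) × ℝ => Fe t (fun r => p.1 r + p.2)) := by
  unfold Fe
  refine Measurable.iSup fun m => Measurable.ite ?_ measurable_const measurable_const
  simp only [FK]
  have : {p : (ℝ → ℝ) × ℝ | ∃ k : Fin (m + 1 + 1) → ℤ, (∀ i : Fin (m + 1), k i.castSucc ≠ k i.succ) ∧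
      ∀ n : ℕ, ∃ q : Fin (m + 1 + 1) → ℚ, (Monotone q ∧ ∀ i, 0 ≤ q i ∧ q i ≤ 1) ∧
      ∀ i, |p.1 (t * q i) + p.2 - k i| < 1 / ((n : ℝ) + 1)} =
      ⋃ k : Fin (m + 1 + 1) → ℤ, ⋂ n : ℕ, ⋃ q : Fin (m + 1 + 1) → ℚ, ⋂ i,
        {p : (ℝ → ℝ) × ℝ | (∀ i : Fin (m + 1), k i.castSucc ≠ k i.succ) ∧
          (Monotone q ∧ ∀ i, 0 ≤ q i ∧ q i ≤ 1) ∧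
          |p.1 (t * q i) + p.2 - k i| < 1 / ((n : ℝ) + 1)} := by
    ext p
    simp only [Set.mem_ofPred_eq, Set.mem_iUnion, Set.mem_iInter]
    refine exists_congr fun k => ?_
    constructor
    · rintro ⟨h1, h2⟩ n
      obtain ⟨q, hq, hq2⟩ := h2 n
      exact ⟨q, fun i => ⟨h1, hq, hq2 i⟩⟩
    · intro h
      refine ⟨?_, fun n => ?_⟩
      · obtain ⟨q, hq⟩ := h 0
        exact (hq 0).1
      · obtain ⟨q, hq⟩ := h n
        exact ⟨q, (hq 0).2.1, fun i => (hq i).2.2⟩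
  rw [this]
  refine MeasurableSet.iUnion fun k => MeasurableSet.iInter fun n => MeasurableSet.iUnion fun q =>
    MeasurableSet.iInter fun i => ?_
  refine (MeasurableSet.const _).inter ((MeasurableSet.const _).inter ?_)
  have hm : Measurable fun p : (ℝ → ℝ) × ℝ => |p.1 (t * q i) + p.2 - k i| := by
    have h1 : Measurable fun p : (ℝ → ℝ) × ℝ => p.1 (t * q i) :=
      (measurable_pi_apply _).comp measurable_fst
    have h2 := (h1.add measurable_snd).sub_const (k i : ℝ)
    exact continuous_abs.measurable.comp h2
  exact measurableSet_lt hm measurable_const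

/-- averaged version -/
def AvF (t : ℝ) (v : ℝ → ℝ) : ℝ≥0∞ :=
  ∫⁻ ρ in Set.Ioo (-(1 / 2 : ℝ)) (1 / 2), Fe t (fun r => v r + ρ)

theorem measurable_AvF (t : ℝ) : Measurable (AvF t) :=
  (measurable_Fe t).lintegral_prod_right'

theorem avgK_eq_AvF {v : ℝ → ℝ} (hv : Continuous v) {t : ℝ} (ht : 0 < t) :
    avgK 1 v 0 t = AvF t v := by
  unfold avgK AvF
  simp only [inv_one, ENNReal.ofReal_one, one_mul]
  refine lintegral_congr fun ρ => crossKe_eq_Fe (by fun_prop) ht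

theorem crossKe_shift (v : ℝ → ℝ) (s t : ℝ) :
    crossKe 1 v s (s + t) = crossKe 1 (fun r => v (s + r)) 0 t := by
  simp [crossKe, crossK]

theorem avgK_shift {w : ℝ → ℝ} (hw : Continuous w) (s : ℝ) {t : ℝ} (ht : 0 ≤ t) :
    avgK 1 w s (s + t) = avgK 1 (fun r => w (s + r) - w s) 0 t := by
  unfold avgK
  simp only [crossKe_shift]
  set f : ℝ → ℝ≥0∞ := fun ρ => crossKe 1 (fun r => w (s + r) + ρ) 0 t with hf
  have hper : ∀ (ρ : ℝ) (k : ℤ), f (ρ + k) = f ρ := by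
    intro ρ k
    have := crossK_add_int (w := fun r => w (s + r) + ρ) (by fun_prop) ht k
    simp only [hf, crossKe]
    rw [← this]
    simp only [add_assoc]
  have hR : ∀ ρ, crossKe 1 (fun r => w (s + r) - w s + ρ) 0 t = f (ρ + (- w s)) := by
    intro ρ
    simp only [hf]
    congr 1
    ext r
    ring
  simp only [hR, inv_one, ENNReal.ofReal_one, one_mul]
  have hIoo : ∀ g : ℝ → ℝ≥0∞, ∫⁻ ρ in Set.Ioo (-(1 / 2 : ℝ)) (1 / 2), g ρ =
      ∫⁻ ρ in Set.Ioc (-(1 / 2 : ℝ)) (-(1 / 2) + 1), g ρ := by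
    intro g
    have : (-(1 / 2) + 1 : ℝ) = 1 / 2 := by norm_num
    rw [this]
    exact setLIntegral_congr Ioo_ae_eq_Ioc
  rw [hIoo, hIoo]
  set c := - w s
  have hmp : MeasurePreserving (fun ρ : ℝ => ρ + c) volume volume := measurePreserving_add_right _ c
  have h1 : ∫⁻ ρ in Set.Ioc (-(1 / 2 : ℝ)) (-(1 / 2) + 1), f (ρ + c) =
      ∫⁻ ρ in Set.Ioc (-(1 / 2 : ℝ) + c) (-(1 / 2) + c + 1), f ρ := by
    rw [← hmp.setLIntegral_comp_preimage_emb (measurableEmbedding_addRight c) f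
      (Set.Ioc (-(1 / 2 : ℝ) + c) (-(1 / 2) + c + 1))]
    congr 2
    ext x
    simp only [Set.mem_Ioc, Set.mem_preimage]
    constructor <;> rintro ⟨h1, h2⟩ <;> constructor <;> linarith
  rw [h1]
  refine (isAddFundamentalDomain_Ioc one_pos _).setLIntegral_eq
    (isAddFundamentalDomain_Ioc one_pos _) f ?_
  rintro ⟨g, hg⟩ x
  obtain ⟨k, rfl⟩ := AddSubgroup.mem_zmultiples_iff.1 hg
  have := hper x k
  rw [← this]
  congr 1
  simp [AddSubgroup.vadd_def, add_comm]
theorem integral_sq_sum {Ω ι : Type*} [Fintype ι] [MeasurableSpace Ω] {P : Measure Ω}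
    (X : ι → Ω → ℝ) (hX : ∀ i, MemLp (X i) 2 P) (c : ι → ℝ) :
    ∫ ω, (∑ i, c i * X i ω) ^ 2 ∂P = ∑ i, ∑ j, c i * c j *
      ((∫ ω, X i ω ^ 2 ∂P + ∫ ω, X j ω ^ 2 ∂P - ∫ ω, (X i ω - X j ω) ^ 2 ∂P) / 2) := by
  have h1 : ∀ i, Integrable (fun ω => X i ω ^ 2) P := fun i => (hX i).integrable_sq
  have h2 : ∀ i j, Integrable (fun ω => (X i ω - X j ω) ^ 2) P := fun i j =>
    ((hX i).sub (hX j)).integrable_sq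
  have h3 : ∀ i j, Integrable (fun ω => X i ω ^ 2 + X j ω ^ 2 - (X i ω - X j ω) ^ 2) P :=
    fun i j => ((h1 i).add (h1 j)).sub (h2 i j)
  have e : ∀ ω, (∑ i, c i * X i ω) ^ 2 = ∑ i, ∑ j, c i * c j *
      ((X i ω ^ 2 + X j ω ^ 2 - (X i ω - X j ω) ^ 2) / 2) := by
    intro ω
    rw [sq, Finset.sum_mul_sum]
    refine Finset.sum_congr rfl fun i _ => Finset.sum_congr rfl fun j _ => ?_
    ring
  simp_rw [e]
  rw [integral_finsetSum _ fun i _ => integrable_finsetSum _ fun j _ =>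
    ((h3 i j).div_const 2).const_mul _]
  refine Finset.sum_congr rfl fun i _ => ?_
  rw [integral_finsetSum _ fun j _ => ((h3 i j).div_const 2).const_mul _]
  refine Finset.sum_congr rfl fun j _ => ?_
  have h4 : Integrable (fun ω => X i ω ^ 2 + X j ω ^ 2) P := (h1 i).add (h1 j)
  rw [integral_const_mul, integral_div, integral_sub h4 (h2 i j), integral_add (h1 i) (h1 j)]

theorem gauss_var {Ω : Type*} [MeasurableSpace Ω] {P : Measure Ω} [IsProbabilityMeasure P]
    {X : Ω → ℝ} (hX : Measurable X) {v : ℝ≥0} (h : Measure.map X P = gaussianReal 0 v) :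
    MemLp X 2 P ∧ ∫ ω, X ω ^ 2 ∂P = v := by
  constructor
  · have := memLp_id_gaussianReal' (μ := 0) (v := v) 2 (by simp)
    rw [← h] at this
    exact (memLp_map_measure_iff (by fun_prop) hX.aemeasurable).1 this
  · have h1 := variance_fun_id_gaussianReal (μ := 0) (v := v)
    rw [variance_of_integral_eq_zero (by fun_prop) integral_id_gaussianReal, ← h,
      integral_map hX.aemeasurable (by fun_prop)] at h1
    exact h1

theorem fbm_gauss {Ω : Type*} [MeasurableSpace Ω] {P : Measure Ω} {H : ℝ} {B : ℝ → Ω → ℝ}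
    (hB : IsFBM H P B) {ι : Type*} [Fintype ι] (t c : ι → ℝ) :
    ∃ v : ℝ≥0, Measure.map (fun ω => ∑ i, c i * B (t i) ω) P = gaussianReal 0 v := by
  obtain ⟨v, hv⟩ := hB.2.2.2.1 (Fintype.card ι) (t ∘ (Fintype.equivFin ι).symm)
    (c ∘ (Fintype.equivFin ι).symm)
  refine ⟨v, ?_⟩
  rw [← hv]
  congr 1
  ext ω
  exact (Equiv.sum_comp (Fintype.equivFin ι).symm (fun i => c i * B (t i) ω)).symm

theorem fbm_gauss_inc {Ω : Type*} [MeasurableSpace Ω] {P : Measure Ω} {H : ℝ} {B : ℝ → Ω → ℝ}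
    (hB : IsFBM H P B) {ι : Type*} [Fintype ι] (t c : ι → ℝ) (s : ℝ) :
    ∃ v : ℝ≥0, Measure.map (fun ω => ∑ i, c i * (B (s + t i) ω - B s ω)) P = gaussianReal 0 v := by
  obtain ⟨v, hv⟩ := fbm_gauss hB (fun i : Option ι => i.elim s (fun i => s + t i))
    (fun i : Option ι => i.elim (- ∑ i, c i) c)
  refine ⟨v, ?_⟩
  rw [← hv]
  congr 1
  ext ω
  rw [Fintype.sum_option]
  simp only [Option.elim, mul_sub, Finset.sum_sub_distrib, ← Finset.sum_mul]
  ring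

theorem fbm_inc_law {Ω : Type*} [MeasurableSpace Ω] {P : Measure Ω} [IsProbabilityMeasure P]
    {H : ℝ} {B : ℝ → Ω → ℝ} (hB : IsFBM H P B) (s t : ℝ) :
    ∃ v : ℝ≥0, Measure.map (fun ω => B t ω - B s ω) P = gaussianReal 0 v := by
  obtain ⟨v, hv⟩ := fbm_gauss_inc hB (ι := Unit) (fun _ => t - s) (fun _ => 1) s
  exact ⟨v, by simpa using hv⟩

theorem fbm_stationary {Ω : Type*} [MeasurableSpace Ω] {P : Measure Ω} [IsProbabilityMeasure P]
    {H : ℝ} {B : ℝ → Ω → ℝ} (hB : IsFBM H P B) (s : ℝ) :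
    Measure.map (fun ω r => B (s + r) ω - B s ω) P = Measure.map (fun ω r => B r ω) P := by
  have hm : ∀ t, Measurable (B t) := hB.2.2.1
  have hmX : ∀ r, Measurable (fun ω => B (s + r) ω - B s ω) := fun r => (hm _).sub (hm _)
  refine (map_eq_iff_forall_finset_map_restrict_eq (X := fun r ω => B (s + r) ω - B s ω) (Y := B)
    (measurable_pi_lambda _ hmX).aemeasurable (measurable_pi_lambda _ hm).aemeasurable).2
    fun I => ?_
  have m1 : Measurable (fun ω => I.restrict (fun r => B (s + r) ω - B s ω)) :=
    measurable_pi_lambda _ fun i => hmX i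
  have m2 : Measurable (fun ω => I.restrict (fun r => B r ω)) :=
    measurable_pi_lambda _ fun i => hm i
  have := Measure.isProbabilityMeasure_map (μ := P) m1.aemeasurable
  have := Measure.isProbabilityMeasure_map (μ := P) m2.aemeasurable
  refine Measure.ext_of_charFunDual (funext fun L => ?_)
  rw [charFunDual_eq_charFun_map_one, charFunDual_eq_charFun_map_one]
  congr 1
  rw [Measure.map_map (by fun_prop) m1, Measure.map_map (by fun_prop) m2]
  set c : I → ℝ := fun i => L (Pi.single i 1) with hc
  have hL : ∀ x : I → ℝ, L x = ∑ i, c i * x i := by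
    intro x
    conv_lhs => rw [pi_eq_sum_univ' x]
    rw [map_sum]
    refine Finset.sum_congr rfl fun i _ => ?_
    rw [map_smul, smul_eq_mul, mul_comm]
  have e1 : (⇑L ∘ fun ω => I.restrict (fun r => B (s + r) ω - B s ω)) =
      fun ω => ∑ i : I, c i * (B (s + i) ω - B s ω) := by
    ext ω; simp [hL, Finset.restrict]
  have e2 : (⇑L ∘ fun ω => I.restrict (fun r => B r ω)) =
      fun ω => ∑ i : I, c i * B i ω := by
    ext ω; simp [hL, Finset.restrict]
  rw [e1, e2]
  obtain ⟨v1, hv1⟩ := fbm_gauss_inc hB (fun i : I => (i : ℝ)) c s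
  obtain ⟨v2, hv2⟩ := fbm_gauss hB (fun i : I => (i : ℝ)) c
  rw [hv1, hv2]
  congr 1
  have g1 := (gauss_var (Finset.measurable_sum _ fun (i : I) _ => (hmX i).const_mul (c i)) hv1).2
  have g2 := (gauss_var (Finset.measurable_sum _ fun (i : I) _ => (hm i).const_mul (c i)) hv2).2
  have L2 : ∀ s t, MemLp (fun ω => B t ω - B s ω) 2 P := by
    intro s t
    obtain ⟨v, hv⟩ := fbm_inc_law hB s t
    exact (gauss_var ((hm t).sub (hm s)) hv).1
  obtain ⟨a, ha, hcov⟩ := hB.2.2.2.2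
  rw [integral_sq_sum _ (fun i => L2 _ _) c] at g1
  have L2' : ∀ t, MemLp (fun ω => B t ω) 2 P := by
    intro t
    simpa [hB.2.1] using L2 0 t
  rw [integral_sq_sum _ (fun i => L2' _) c] at g2
  have hcov0 : ∀ t, ∫ ω, (B t ω) ^ 2 ∂P = a * |t| ^ (2 * H) := by
    intro t
    simpa [hB.2.1] using hcov 0 t
  simp only [hcov0, hcov, sub_sub_sub_cancel_right, add_sub_cancel_left,
    add_sub_add_left_eq_sub] at g1 g2
  exact_mod_cast g1.symm.trans g2

theorem fbm_moment {Ω : Type*} [MeasurableSpace Ω] {P : Measure Ω} [IsProbabilityMeasure P]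
    {H : ℝ} {B : ℝ → Ω → ℝ} (hB : IsFBM H P B) (p : ℕ) :
    ∃ M : ℝ, 0 ≤ M ∧ ∀ s t, ∫⁻ ω, ENNReal.ofReal ((B t ω - B s ω) ^ (2 * p)) ∂P =
      ENNReal.ofReal (M * (|t - s| ^ (2 * H)) ^ p) := by
  have hm : ∀ t, Measurable (B t) := hB.2.2.1
  obtain ⟨a, ha, hcov⟩ := hB.2.2.2.2
  have hIntg : Integrable (fun x : ℝ => x ^ (2 * p)) (gaussianReal 0 1) := by
    have := (memLp_id_gaussianReal' (μ := 0) (v := 1) ((2 * p : ℕ) : ℝ≥0∞) (ENNReal.natCast_ne_top _)).integrable_norm_pow'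
    simpa [pow_mul] using this
  refine ⟨(∫ x, x ^ (2 * p) ∂(gaussianReal 0 1)) * a ^ p, ?_, fun s t => ?_⟩
  · have : 0 ≤ ∫ x, x ^ (2 * p) ∂(gaussianReal 0 1) :=
      integral_nonneg fun x => by simp only [Pi.zero_apply]; rw [pow_mul]; positivity
    positivity
  · obtain ⟨v, hv⟩ := fbm_inc_law hB s t
    have hmm : Measurable (fun ω => B t ω - B s ω) := (hm t).sub (hm s)
    have hvv := (gauss_var hmm hv).2
    rw [hcov] at hvv
    have h1 : ∫⁻ ω, ENNReal.ofReal ((B t ω - B s ω) ^ (2 * p)) ∂P =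
        ∫⁻ x, ENNReal.ofReal (x ^ (2 * p)) ∂(gaussianReal 0 v) := by
      rw [← hv, lintegral_map (by fun_prop) hmm]
    have h2 : gaussianReal 0 v = (gaussianReal 0 1).map (fun x => Real.sqrt v * x) := by
      rw [gaussianReal_map_const_mul]
      congr 1
      · simp
      · ext; simp
    rw [h1, h2, lintegral_map (by fun_prop) (by fun_prop),
      ← ofReal_integral_eq_lintegral_ofReal]
    · congr 1
      have : ∀ x : ℝ, (Real.sqrt v * x) ^ (2 * p) = (v : ℝ) ^ p * x ^ (2 * p) := by
        intro x
        rw [mul_pow, pow_mul (Real.sqrt v), Real.sq_sqrt v.coe_nonneg]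
      simp_rw [this]
      rw [integral_const_mul, ← hvv, mul_pow]
      ring
    · simp_rw [mul_pow]
      exact hIntg.const_mul _
    · exact ae_of_all _ fun x => by simp only [Pi.zero_apply]; rw [pow_mul]; positivity
/-- weighted sum of dyadic increments -/
def Sd (p : ℕ) (w : ℝ → ℝ) : ℝ≥0∞ :=
  ∑' n : ℕ, ∑ j ∈ Finset.range (2 ^ n),
    2 ^ n * ENNReal.ofReal ((w ((j + 1 : ℕ) / 2 ^ n) - w ((j : ℕ) / 2 ^ n)) ^ (2 * p))

theorem Sd_add_const (p : ℕ) (w : ℝ → ℝ) (ρ : ℝ) : Sd p (fun r => w r + ρ) = Sd p w := by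
  simp [Sd]

theorem Sd_inc_le {p : ℕ} {w : ℝ → ℝ} (h : Sd p w ≠ ⊤) (n j : ℕ) (hj : j < 2 ^ n) :
    (w ((j + 1 : ℕ) / 2 ^ n) - w ((j : ℕ) / 2 ^ n)) ^ (2 * p) ≤ (Sd p w).toReal * (1 / 2) ^ n := by
  have h1 : 2 ^ n * ENNReal.ofReal ((w ((j + 1 : ℕ) / 2 ^ n) - w ((j : ℕ) / 2 ^ n)) ^ (2 * p))
      ≤ Sd p w := by
    refine le_trans ?_ (ENNReal.le_tsum n)
    exact Finset.single_le_sum (f := fun j : ℕ =>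
      2 ^ n * ENNReal.ofReal ((w ((j + 1 : ℕ) / 2 ^ n) - w ((j : ℕ) / 2 ^ n)) ^ (2 * p)))
      (fun _ _ => bot_le) (Finset.mem_range.2 hj)
  have h2 := ENNReal.toReal_mono h h1
  have h0 : 0 ≤ (w ((j + 1 : ℕ) / 2 ^ n) - w ((j : ℕ) / 2 ^ n)) ^ (2 * p) := by
    rw [pow_mul]; positivity
  rw [ENNReal.toReal_mul, ENNReal.toReal_ofReal h0] at h2
  simp only [ENNReal.toReal_pow, ENNReal.toReal_ofNat] at h2
  rw [one_div, inv_pow, ← div_eq_mul_inv, le_div_iff₀ (by positivity)]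
  linarith

/-- chaining -/
theorem osc_bound {w : ℝ → ℝ} (hw : Continuous w) {β θ : ℝ} (hβ : 0 ≤ β) (hθ0 : 0 < θ) (hθ1 : θ < 1)
    (h : ∀ n j : ℕ, j < 2 ^ n → |w ((j + 1 : ℕ) / 2 ^ n) - w ((j : ℕ) / 2 ^ n)| ≤ β * θ ^ n)
    (n j : ℕ) (hj : j < 2 ^ n) (x : ℝ) (hx0 : (j : ℝ) / 2 ^ n ≤ x) (hx1 : x ≤ (j + 1 : ℕ) / 2 ^ n) :
    |w x - w (j / 2 ^ n)| ≤ β * θ ^ n / (1 - θ) := by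
  have hpos : 0 < 1 - θ := by linarith
  rcases hx1.eq_or_lt with hx1 | hx1
  · rw [hx1]
    refine (h n j hj).trans ?_
    rw [le_div_iff₀ hpos]
    have : 0 ≤ β * θ ^ n := by positivity
    nlinarith
  · have hxnn : 0 ≤ x := le_trans (by positivity) hx0
    have hx2 : x < 1 := by
      refine hx1.trans_le ?_
      rw [div_le_one (by positivity)]
      exact_mod_cast hj
    set d : ℕ → ℝ := fun N => (⌊x * 2 ^ N⌋₊ : ℝ) / 2 ^ N with hd
    have hstep : ∀ N, dist (w (d N)) (w (d (N + 1))) ≤ β * θ * θ ^ N := by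
      intro N
      set i := ⌊x * 2 ^ N⌋₊ with hi
      have hxN : 0 ≤ x * 2 ^ N := by positivity
      have hi1 : (i : ℝ) ≤ x * 2 ^ N := Nat.floor_le hxN
      have hi2 : x * 2 ^ N < i + 1 := Nat.lt_floor_add_one _
      have hcase : ⌊x * 2 ^ (N + 1)⌋₊ = 2 * i ∨ ⌊x * 2 ^ (N + 1)⌋₊ = 2 * i + 1 := by
        have h1 : 2 * i ≤ ⌊x * 2 ^ (N + 1)⌋₊ := by
          apply Nat.le_floor
          push_cast
          rw [pow_succ]; nlinarith
        have h2 : ⌊x * 2 ^ (N + 1)⌋₊ < 2 * i + 2 := by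
          rw [Nat.floor_lt (by positivity)]
          push_cast
          rw [pow_succ]; nlinarith
        omega
      have hdN : d N = ((2 * i : ℕ) : ℝ) / 2 ^ (N + 1) := by
        simp only [hd, ← hi]
        push_cast
        rw [pow_succ]
        field_simp
      rcases hcase with hc | hc
      · have : d (N + 1) = d N := by
          rw [hdN]; simp only [hd, hc]
        rw [this, dist_self]
        positivity
      · have hd1 : d (N + 1) = ((2 * i + 1 : ℕ) : ℝ) / 2 ^ (N + 1) := by
          simp only [hd, hc]
        rw [hdN, hd1, dist_comm, Real.dist_eq]
        refine (h (N + 1) (2 * i) ?_).trans_eq (by ring)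
        have : (i : ℝ) < 2 ^ N := by
          have : x * 2 ^ N < 2 ^ N := by
            have : (0 : ℝ) < 2 ^ N := by positivity
            nlinarith
          linarith
        have : i < 2 ^ N := by exact_mod_cast this
        rw [pow_succ]; omega
    have hlim : Tendsto (fun N => w (d N)) atTop (𝓝 (w x)) := by
      refine (hw.tendsto _).comp ?_
      have h1 := (tendsto_nat_floor_mul_div_atTop hxnn (R := ℝ)).comp
        (tendsto_pow_atTop_atTop_of_one_lt (one_lt_two (α := ℝ)))
      exact h1
    have hfin := dist_le_of_le_geometric_of_tendsto θ (β * θ) hθ1 hstep hlim n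
    have hdn : d n = j / 2 ^ n := by
      simp only [hd]
      congr 2
      rw [Nat.floor_eq_iff (by positivity)]
      rw [div_le_iff₀ (by positivity)] at hx0
      rw [lt_div_iff₀ (by positivity)] at hx1
      push_cast at hx1
      exact ⟨hx0, hx1⟩
    rw [hdn, dist_comm, Real.dist_eq] at hfin
    refine hfin.trans ?_
    gcongr
    nlinarith

theorem crossK_le_count {w : ℝ → ℝ} (hw : Continuous w) {h : ℝ} (hh : 0 ≤ h) (N : ℕ)
    (hz : ∀ j < N, crossK 1 w (j * h) ((j + 1 : ℕ) * h) = 0) (hN : 1 ≤ N) :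
    crossK 1 w 0 (N * h) ≤ N := by
  induction N, hN using Nat.le_induction with
  | base =>
    have := hz 0 (by omega)
    simp only [Nat.cast_zero, zero_mul, zero_add] at this
    rw [this]
    exact bot_le
  | succ n hn ih =>
    have h1 := crossK_sub hw (a := 0) (b := n * h) (c := (n + 1 : ℕ) * h) (by positivity)
      (by push_cast; nlinarith)
    rw [hz n (by omega), add_zero] at h1
    refine h1.trans ?_
    push_cast
    gcongr
    exact ih fun j hj => hz j (by omega)

theorem crossKe_le_Sd (p : ℕ) (hp : 1 ≤ p) : ∃ A : ℝ, 0 < A ∧ ∀ w : ℝ → ℝ, Continuous w →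
    crossKe 1 w 0 1 ≤ 2 + ENNReal.ofReal A * Sd p w := by
  have hp0 : (2 * p) ≠ 0 := by omega
  obtain ⟨θ, hθ0, hθ⟩ : ∃ θ : ℝ, 0 < θ ∧ θ ^ (2 * p) = 1 / 2 :=
    ⟨(1 / 2 : ℝ) ^ (((2 * p : ℕ) : ℝ)⁻¹), by positivity,
      Real.rpow_inv_natCast_pow (by norm_num) hp0⟩
  have hθ1 : θ < 1 := by
    by_contra hc
    have := one_le_pow₀ (not_lt.1 hc) (n := 2 * p)
    rw [hθ] at this
    norm_num at this
  have hpos : 0 < 1 - θ := by linarith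
  set A := (4 / (1 - θ)) ^ (2 * p) with hA
  have hA0 : 0 < A := by positivity
  refine ⟨2 * A, by positivity, fun w hw => ?_⟩
  by_cases hS : Sd p w = ⊤
  · rw [hS, ENNReal.mul_top (by simpa using hA0)]
    simp
  set σ := (Sd p w).toReal with hσ
  have hσ0 : 0 ≤ σ := ENNReal.toReal_nonneg
  set β := σ ^ (((2 * p : ℕ) : ℝ)⁻¹) with hβ
  have hβ0 : 0 ≤ β := by positivity
  have hβp : β ^ (2 * p) = σ := Real.rpow_inv_natCast_pow hσ0 hp0
  have hinc : ∀ n j : ℕ, j < 2 ^ n →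
      |w ((j + 1 : ℕ) / 2 ^ n) - w ((j : ℕ) / 2 ^ n)| ≤ β * θ ^ n := by
    intro n j hj
    have h1 := Sd_inc_le hS n j hj
    refine le_of_pow_le_pow_left₀ hp0 (by positivity) ?_
    rw [Even.pow_abs (even_two_mul p)]
    refine h1.trans_eq ?_
    rw [mul_pow, hβp, ← pow_mul, mul_comm n, pow_mul, hθ]
  obtain ⟨n, hn1, hn2⟩ := exists_nat_pow_near (le_max_left 1 (A * σ)) (one_lt_two (α := ℝ))
  have hosc : β * θ ^ (n + 1) / (1 - θ) < 1 / 2 := by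
    have hlt : A * σ < 2 ^ (n + 1) := (le_max_right _ _).trans_lt hn2
    have : (4 / (1 - θ) * β * θ ^ (n + 1)) ^ (2 * p) < 1 ^ (2 * p) := by
      rw [mul_pow, mul_pow, hβp, ← pow_mul, mul_comm (n + 1), pow_mul θ, hθ, ← hA, one_pow,
        one_div, inv_pow, ← div_eq_mul_inv, div_lt_one (by positivity)]
      exact hlt
    have h2 := lt_of_pow_lt_pow_left₀ _ zero_le_one this
    have h3 : 4 / (1 - θ) * β * θ ^ (n + 1) = 4 * (β * θ ^ (n + 1) / (1 - θ)) := by ring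
    rw [h3] at h2
    linarith
  have hcount := crossK_le_count hw (h := 1 / 2 ^ (n + 1)) (by positivity) (2 ^ (n + 1))
    (fun j hj => by
      refine crossK_eq_zero hw ?_ ?_
      · push_cast
        gcongr
        linarith
      · intro x hx y hy
        rw [mul_one_div, mul_one_div] at hx hy
        have h1 := osc_bound hw hβ0 hθ0 hθ1 hinc (n + 1) j hj x hx.1 hx.2
        have h2 := osc_bound hw hβ0 hθ0 hθ1 hinc (n + 1) j hj y hy.1 hy.2
        have h3 := abs_sub_le (w x) (w (j / 2 ^ (n + 1))) (w y)
        rw [abs_sub_comm (w (j / 2 ^ (n + 1))) (w y)] at h3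
        linarith) Nat.one_le_two_pow
  have e1 : ((2 ^ (n + 1) : ℕ) : ℝ) * (1 / 2 ^ (n + 1)) = 1 := by
    push_cast; field_simp
  rw [e1] at hcount
  have h5 : crossKe 1 w 0 1 ≤ ((2 ^ (n + 1) : ℕ) : ℝ≥0∞) := by
    have := ENat.toENNReal_le.2 hcount
    simpa [crossKe] using this
  refine h5.trans ?_
  have h6 : ((2 ^ (n + 1) : ℕ) : ℝ) ≤ 2 + 2 * A * σ := by
    push_cast
    rw [pow_succ]
    have : max 1 (A * σ) ≤ 1 + A * σ := max_le (by nlinarith [mul_nonneg hA0.le hσ0]) (by linarith)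
    linarith
  calc ((2 ^ (n + 1) : ℕ) : ℝ≥0∞) = ENNReal.ofReal ((2 ^ (n + 1) : ℕ) : ℝ) :=
        (ENNReal.ofReal_natCast _).symm
    _ ≤ ENNReal.ofReal (2 + 2 * A * σ) := ENNReal.ofReal_le_ofReal h6
    _ = 2 + ENNReal.ofReal (2 * A) * Sd p w := by
        rw [ENNReal.ofReal_add (by norm_num) (by positivity), ENNReal.ofReal_mul (by positivity),
          hσ, ENNReal.ofReal_toReal hS]
        simp

theorem lintegral_Sd_lt_top {Ω : Type*} [MeasurableSpace Ω] {P : Measure Ω}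
    [IsProbabilityMeasure P] {H : ℝ} {B : ℝ → Ω → ℝ} (hB : IsFBM H P B) (hH : 0 < H) (p : ℕ)
    (hp : 1 < H * p) : ∫⁻ ω, Sd p (fun r => B r ω) ∂P ≠ ⊤ := by
  have hm : ∀ t, Measurable (B t) := hB.2.2.1
  obtain ⟨M, hM, hmom⟩ := fbm_moment hB p
  unfold Sd
  rw [lintegral_tsum fun n => by fun_prop]
  have key : ∀ n : ℕ, ∫⁻ ω, ∑ j ∈ Finset.range (2 ^ n), 2 ^ n *
      ENNReal.ofReal ((B ((j + 1 : ℕ) / 2 ^ n) ω - B ((j : ℕ) / 2 ^ n) ω) ^ (2 * p)) ∂P =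
      ENNReal.ofReal (M * (4 * ((1 / 2) ^ (2 * H)) ^ p) ^ n) := by
    intro n
    rw [lintegral_finsetSum _ fun j _ => by fun_prop]
    have h1 : ∀ j ∈ Finset.range (2 ^ n), ∫⁻ ω, 2 ^ n *
        ENNReal.ofReal ((B ((j + 1 : ℕ) / 2 ^ n) ω - B ((j : ℕ) / 2 ^ n) ω) ^ (2 * p)) ∂P =
        ENNReal.ofReal (2 ^ n * (M * (((1 / 2) ^ (2 * H)) ^ p) ^ n)) := by
      intro j _
      rw [lintegral_const_mul _ (by fun_prop), hmom, ENNReal.ofReal_mul (p := 2 ^ n) (by positivity),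
        ENNReal.ofReal_pow (p := 2) (by norm_num)]
      congr 1
      · simp
      · congr 2
        have e : |((j + 1 : ℕ) : ℝ) / 2 ^ n - (j : ℕ) / 2 ^ n| = (1 / 2) ^ n := by
          rw [← sub_div]
          push_cast
          rw [add_sub_cancel_left, abs_of_pos (by positivity), one_div, one_div, inv_pow]
        rw [e, ← pow_mul, mul_comm p n, pow_mul, ← Real.rpow_natCast ((1 / 2 : ℝ)) n,
          ← Real.rpow_natCast _ n, ← Real.rpow_mul (by norm_num), ← Real.rpow_mul (by norm_num),
          mul_comm (n : ℝ)]
    rw [Finset.sum_congr rfl h1, Finset.sum_const, Finset.card_range, nsmul_eq_mul,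
      ← ENNReal.ofReal_natCast, ← ENNReal.ofReal_mul (by positivity)]
    congr 1
    push_cast
    have : (4 : ℝ) = 2 * 2 := by norm_num
    rw [this, mul_pow, mul_pow]
    ring
  rw [tsum_congr key]
  have hr : 4 * (((1 / 2 : ℝ)) ^ (2 * H)) ^ p < 1 := by
    rw [← Real.rpow_natCast, ← Real.rpow_mul (by norm_num)]
    have h4 : (4 : ℝ) = (1 / 2 : ℝ) ^ (-2 : ℝ) := by
      rw [Real.rpow_neg (by norm_num)]
      norm_num
    rw [h4, ← Real.rpow_add (by norm_num)]
    apply Real.rpow_lt_one (by norm_num) (by norm_num)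
    nlinarith
  have hsum : Summable (fun n : ℕ => M * (4 * (((1 / 2 : ℝ)) ^ (2 * H)) ^ p) ^ n) :=
    (summable_geometric_of_lt_one (by positivity) hr).mul_left M
  rw [← ENNReal.ofReal_tsum_of_nonneg (fun n => by positivity) hsum]
  exact ENNReal.ofReal_ne_top
theorem avgK_super {w : ℝ → ℝ} (hw : Continuous w) {s t : ℝ} (hs : 0 < s) (ht : 0 < t) :
    avgK 1 w 0 s + avgK 1 w s (s + t) ≤ avgK 1 w 0 (s + t) := by
  unfold avgK
  simp only [inv_one, ENNReal.ofReal_one, one_mul]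
  refine (le_lintegral_add _ _).trans (lintegral_mono fun ρ => ?_)
  simp only [crossKe]
  rw [← ENat.toENNReal_add, ENat.toENNReal_le]
  exact crossK_super (by fun_prop) hs.le (by linarith)

theorem avgK_sub {w : ℝ → ℝ} (hw : Continuous w) {s t : ℝ} (hs : 0 < s) (ht : 0 < t) :
    avgK 1 w 0 (s + t) ≤ avgK 1 w 0 s + avgK 1 w s (s + t) + 1 := by
  unfold avgK
  simp only [inv_one, ENNReal.ofReal_one, one_mul]
  have hm : Measurable (fun ρ => crossKe 1 (fun r => w r + ρ) 0 s) := by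
    have : (fun ρ => crossKe 1 (fun r => w r + ρ) 0 s) = fun ρ => Fe s (fun r => w r + ρ) := by
      ext ρ; exact crossKe_eq_Fe (by fun_prop) hs
    rw [this]
    exact (measurable_Fe s).comp (measurable_prodMk_left (x := w))
  have h1 : (1 : ℝ≥0∞) = ∫⁻ ρ in Set.Ioo (-(1 / 2 : ℝ)) (1 / 2), 1 := by
    rw [setLIntegral_one, Real.volume_Ioo]
    norm_num
  conv_rhs => rw [h1]
  rw [← lintegral_add_left hm, ← lintegral_add_right _ measurable_const]
  refine lintegral_mono fun ρ => ?_
  simp only [crossKe]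
  rw [← ENat.toENNReal_add, ← ENat.toENNReal_one, ← ENat.toENNReal_add, ENat.toENNReal_le]
  exact crossK_sub (by fun_prop) hs.le (by linarith)

section
variable {Ω : Type*} [MeasurableSpace Ω] {P : Measure Ω} [IsProbabilityMeasure P]
    {H : ℝ} {B : ℝ → Ω → ℝ}

theorem measurable_avgK (hB : IsFBM H P B) {t : ℝ} (ht : 0 < t) :
    Measurable (fun ω => avgK 1 (fun r => B r ω) 0 t) := by
  have : (fun ω => avgK 1 (fun r => B r ω) 0 t) = AvF t ∘ (fun ω r => B r ω) := by
    ext ω; exact avgK_eq_AvF (hB.1 ω) ht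
  rw [this]
  exact (measurable_AvF t).comp (measurable_pi_lambda _ hB.2.2.1)

theorem lintegral_shift (hB : IsFBM H P B) (s : ℝ) {t : ℝ} (ht : 0 < t) :
    ∫⁻ ω, avgK 1 (fun r => B r ω) s (s + t) ∂P = ∫⁻ ω, avgK 1 (fun r => B r ω) 0 t ∂P := by
  have e1 : ∀ ω, avgK 1 (fun r => B r ω) s (s + t) = AvF t (fun r => B (s + r) ω - B s ω) := by
    intro ω
    have hc := hB.1 ω
    rw [avgK_shift hc s ht.le, avgK_eq_AvF _ ht]
    exact (hc.comp (continuous_const.add continuous_id)).sub continuous_const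
  have e2 : ∀ ω, avgK 1 (fun r => B r ω) 0 t = AvF t (fun r => B r ω) := fun ω =>
    avgK_eq_AvF (hB.1 ω) ht
  simp_rw [e1, e2]
  have m1 : Measurable (fun ω r => B (s + r) ω - B s ω) :=
    measurable_pi_lambda _ fun r => (hB.2.2.1 _).sub (hB.2.2.1 _)
  have m2 : Measurable (fun ω r => B r ω) := measurable_pi_lambda _ hB.2.2.1
  rw [← lintegral_map (measurable_AvF t) m1, ← lintegral_map (measurable_AvF t) m2,
    fbm_stationary hB s]

theorem E_super (hB : IsFBM H P B) {s t : ℝ} (hs : 0 < s) (ht : 0 < t) :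
    ∫⁻ ω, avgK 1 (fun r => B r ω) 0 s ∂P + ∫⁻ ω, avgK 1 (fun r => B r ω) 0 t ∂P ≤
      ∫⁻ ω, avgK 1 (fun r => B r ω) 0 (s + t) ∂P := by
  rw [← lintegral_shift hB s ht]
  exact (le_lintegral_add _ _).trans (lintegral_mono fun ω => avgK_super (hB.1 ω) hs ht)

theorem E_sub (hB : IsFBM H P B) {s t : ℝ} (hs : 0 < s) (ht : 0 < t) :
    ∫⁻ ω, avgK 1 (fun r => B r ω) 0 (s + t) ∂P ≤
    ∫⁻ ω, avgK 1 (fun r => B r ω) 0 s ∂P + ∫⁻ ω, avgK 1 (fun r => B r ω) 0 t ∂P + 1 := by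
  have h1 : (1 : ℝ≥0∞) = ∫⁻ ω, 1 ∂P := by simp
  rw [← lintegral_shift hB s ht, h1, ← lintegral_add_left (measurable_avgK hB hs),
    ← lintegral_add_right _ measurable_const]
  exact lintegral_mono fun ω => avgK_sub (hB.1 ω) hs ht

theorem E_one (hB : IsFBM H P B) (hH : 0 < H) :
    ∫⁻ ω, avgK 1 (fun r => B r ω) 0 1 ∂P ≠ ⊤ := by
  obtain ⟨p, hp⟩ := exists_nat_gt (1 / H)
  have hp' : 1 < H * p := by rw [div_lt_iff₀ hH] at hp; linarith
  have hp1 : 1 ≤ p := by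
    rcases Nat.eq_zero_or_pos p with h | h
    · rw [h] at hp'; norm_num at hp'
    · exact h
  obtain ⟨A, hA, hK⟩ := crossKe_le_Sd p hp1
  have hle : ∀ ω, avgK 1 (fun r => B r ω) 0 1 ≤ 2 + ENNReal.ofReal A * Sd p (fun r => B r ω) := by
    intro ω
    have hc := hB.1 ω
    unfold avgK
    simp only [inv_one, ENNReal.ofReal_one, one_mul]
    calc _ ≤ ∫⁻ ρ in Set.Ioo (-(1 / 2 : ℝ)) (1 / 2),
            (2 + ENNReal.ofReal A * Sd p (fun r => B r ω)) := by
          refine lintegral_mono fun ρ => ?_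
          have := hK (fun r => B r ω + ρ) (by fun_prop)
          rwa [Sd_add_const p (fun r => B r ω) ρ] at this
      _ = _ := by
          rw [setLIntegral_const, Real.volume_Ioo]
          norm_num
  have hm : ∀ t, Measurable (B t) := hB.2.2.1
  have h2 := lintegral_mono (μ := P) hle
  refine ne_top_of_le_ne_top ?_ h2
  rw [lintegral_add_left measurable_const, lintegral_const_mul' _ _ ENNReal.ofReal_ne_top]
  refine ENNReal.add_ne_top.2 ⟨by simp, ENNReal.mul_ne_top ENNReal.ofReal_ne_top ?_⟩
  exact lintegral_Sd_lt_top hB hH p hp'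

theorem E_pos (hB : IsFBM H P B) : 0 < ∫⁻ ω, avgK 1 (fun r => B r ω) 0 1 ∂P := by
  have hm : ∀ t, Measurable (B t) := hB.2.2.1
  obtain ⟨v, hv⟩ := fbm_inc_law hB 0 1
  have hmm : Measurable (fun ω => B 1 ω - B 0 ω) := (hm 1).sub (hm 0)
  have hvv := (gauss_var hmm hv).2
  obtain ⟨a, ha, hcov⟩ := hB.2.2.2.2
  rw [hcov] at hvv
  have hv0 : v ≠ 0 := by
    rintro rfl
    simp at hvv
    exact ha.ne' hvv
  set S : Set ℝ := {x | 2 ≤ |x|} with hS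
  have hSm : MeasurableSet S := measurableSet_le measurable_const (by fun_prop)
  have hpos : 0 < P ((fun ω => B 1 ω - B 0 ω) ⁻¹' S) := by
    rw [← Measure.map_apply hmm hSm, hv, pos_iff_ne_zero]
    intro h0
    have h1 := gaussianReal_absolutelyContinuous' 0 hv0 h0
    have h2 : volume (Set.Ioo (2 : ℝ) 3) ≤ volume S := by
      refine measure_mono fun x hx => ?_
      exact hx.1.le.trans (le_abs_self x)
    rw [h1, Real.volume_Ioo] at h2
    norm_num at h2
  refine hpos.trans_le ?_
  rw [← lintegral_indicator_one (hmm hSm)]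
  refine lintegral_mono fun ω => ?_
  by_cases hω : ω ∈ (fun ω => B 1 ω - B 0 ω) ⁻¹' S
  · rw [Set.indicator_of_mem hω]
    have hc := hB.1 ω
    unfold avgK
    simp only [inv_one, ENNReal.ofReal_one, one_mul, Pi.one_apply]
    have h1 : (1 : ℝ≥0∞) = ∫⁻ ρ in Set.Ioo (-(1 / 2 : ℝ)) (1 / 2), 1 := by
      rw [setLIntegral_one, Real.volume_Ioo]
      norm_num
    conv_lhs => rw [h1]
    refine lintegral_mono fun ρ => ?_
    simp only [crossKe]
    rw [← ENat.toENNReal_one, ENat.toENNReal_le]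
    refine one_le_crossK (by fun_prop) zero_le_one ?_
    have h3 : 2 ≤ |B 1 ω - B 0 ω| := hω
    simpa using h3
  · rw [Set.indicator_of_notMem hω]
    exact bot_le

end

theorem fekete_bound {e : ℝ → ℝ} (h0 : ∀ t, 0 < t → 0 ≤ e t)
    (hsup : ∀ s t, 0 < s → 0 < t → e s + e t ≤ e (s + t))
    (hsub : ∀ s t, 0 < s → 0 < t → e (s + t) ≤ e s + e t + 1) {s t : ℝ} (hs : 0 < s) (ht : 0 < t) :
    e s / s ≤ (e t + 1) / t := by
  have hmono : ∀ s t, 0 < s → s ≤ t → e s ≤ e t := by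
    intro s t hs hst
    rcases hst.eq_or_lt with h | h
    · rw [h]
    · have h1 := hsup s (t - s) hs (by linarith)
      have h2 := h0 (t - s) (by linarith)
      rw [add_sub_cancel] at h1
      linarith
  have h1 : ∀ n : ℕ, ((n + 1 : ℕ) : ℝ) * e s ≤ e ((n + 1 : ℕ) * s) := by
    intro n
    induction n with
    | zero => simp
    | succ n ih =>
      have := hsup ((n + 1 : ℕ) * s) s (by positivity) hs
      have e1 : ((n + 1 + 1 : ℕ) : ℝ) * s = (n + 1 : ℕ) * s + s := by push_cast; ring
      rw [e1]
      push_cast at *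
      linarith
  have h2 : ∀ n : ℕ, e ((n + 1 : ℕ) * t) ≤ ((n + 1 : ℕ) : ℝ) * (e t + 1) := by
    intro n
    induction n with
    | zero => simp
    | succ n ih =>
      have := hsub ((n + 1 : ℕ) * t) t (by positivity) ht
      have e1 : ((n + 1 + 1 : ℕ) : ℝ) * t = (n + 1 : ℕ) * t + t := by push_cast; ring
      rw [e1]
      push_cast at *
      linarith
  have het := h0 t ht
  have key : ∀ n : ℕ, e s ≤ s * (e t + 1) / t + (e t + 1) * (1 / ((n : ℝ) + 1)) := by
    intro n
    have hfl := Nat.lt_floor_add_one (((n + 1 : ℕ) : ℝ) * s / t)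
    have hfl2 := Nat.floor_le (a := ((n + 1 : ℕ) : ℝ) * s / t) (by positivity)
    set m := ⌊((n + 1 : ℕ) : ℝ) * s / t⌋₊
    have a1 : ((n + 1 : ℕ) : ℝ) * s ≤ (m + 1 : ℕ) * t := by
      rw [div_lt_iff₀ ht] at hfl
      push_cast at *
      linarith
    have a2 := (h1 n).trans ((hmono _ _ (by positivity) a1).trans (h2 m))
    have a3 : ((m + 1 : ℕ) : ℝ) * (e t + 1) ≤ (((n + 1 : ℕ) : ℝ) * s / t + 1) * (e t + 1) := by
      gcongr
      push_cast
      push_cast at hfl2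
      linarith
    have a4 := a2.trans a3
    push_cast at a4
    have hn : (0 : ℝ) < (n : ℝ) + 1 := by positivity
    have a5 : e s ≤ ((((n : ℝ) + 1) * s / t + 1) * (e t + 1)) / ((n : ℝ) + 1) := by
      rw [le_div_iff₀ hn]; linarith
    refine a5.trans_eq ?_
    field_simp
  have hlim : Tendsto (fun n : ℕ => s * (e t + 1) / t + (e t + 1) * (1 / ((n : ℝ) + 1))) atTop
      (𝓝 (s * (e t + 1) / t + (e t + 1) * 0)) :=
    (tendsto_one_div_add_atTop_nhds_zero_nat.const_mul _).const_add _
  have h3 := ge_of_tendsto' hlim key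
  rw [mul_zero, add_zero] at h3
  rw [div_le_iff₀ hs]
  refine h3.trans_eq ?_
  ring

/-- **Non-triviality of `c_H` and approximation rate.** For every `H ∈ (0,1)`, the
constant `c_H` is finite and strictly positive, and for every `t > 0`,
`|c_H - t⁻¹ E[K̄_{0,t}(1,B)]| ≤ t⁻¹`. -/
theorem cH_nontrivial
    {Ω : Type*} [MeasurableSpace Ω] (P : Measure Ω) [IsProbabilityMeasure P]
    (H : ℝ) (hH : H ∈ Set.Ioo (0 : ℝ) 1) (B : ℝ → Ω → ℝ) (hB : IsFBM H P B) :
    0 < cHe P B ∧ cHe P B ≠ ⊤ ∧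
      ∀ t : ℝ, 0 < t →
        |cH P B - t⁻¹ * (∫⁻ ω, avgK 1 (fun r => B r ω) 0 t ∂P).toReal| ≤ t⁻¹ := by

  obtain ⟨hH0, hH1⟩ := hH
  set E : ℝ → ℝ≥0∞ := fun t => ∫⁻ ω, avgK 1 (fun r => B r ω) 0 t ∂P with hE
  have hsup : ∀ s t, 0 < s → 0 < t → E s + E t ≤ E (s + t) := fun s t hs ht => E_super hB hs ht
  have hsub : ∀ s t, 0 < s → 0 < t → E (s + t) ≤ E s + E t + 1 := fun s t hs ht => E_sub hB hs ht
  have hnat : ∀ n : ℕ, E ((n + 1 : ℕ) : ℝ) ≠ ⊤ := by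
    intro n
    induction n with
    | zero => simpa using E_one hB hH0
    | succ n ih =>
      have := hsub ((n + 1 : ℕ) : ℝ) 1 (by positivity) one_pos
      have e1 : ((n + 1 + 1 : ℕ) : ℝ) = (n + 1 : ℕ) + 1 := by push_cast; ring
      rw [e1]
      refine ne_top_of_le_ne_top ?_ this
      exact ENNReal.add_ne_top.2 ⟨ENNReal.add_ne_top.2 ⟨ih, E_one hB hH0⟩, ENNReal.one_ne_top⟩
  have hfin : ∀ t, 0 < t → E t ≠ ⊤ := by
    intro t ht
    obtain ⟨n, hn⟩ := exists_nat_gt t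
    have hlt : t < ((n + 1 : ℕ) : ℝ) := by push_cast; linarith
    have := hsup t (((n + 1 : ℕ) : ℝ) - t) ht (by linarith)
    rw [add_sub_cancel] at this
    exact ne_top_of_le_ne_top (hnat n) (le_self_add.trans this)
  set e : ℝ → ℝ := fun t => (E t).toReal with he
  have heE : ∀ t, 0 < t → E t = ENNReal.ofReal (e t) := fun t ht =>
    (ENNReal.ofReal_toReal (hfin t ht)).symm
  have hfek : ∀ s t, 0 < s → 0 < t → e s / s ≤ (e t + 1) / t := by
    intro s t hs ht
    refine fekete_bound (fun t _ => ENNReal.toReal_nonneg) ?_ ?_ hs ht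
    · intro s t hs ht
      rw [← ENNReal.toReal_add (hfin s hs) (hfin t ht)]
      exact ENNReal.toReal_mono (hfin _ (by linarith)) (hsup s t hs ht)
    · intro s t hs ht
      have h1 : E s + E t ≠ ⊤ := ENNReal.add_ne_top.2 ⟨hfin s hs, hfin t ht⟩
      have h2 := ENNReal.toReal_mono (ENNReal.add_ne_top.2 ⟨h1, ENNReal.one_ne_top⟩)
        (hsub s t hs ht)
      rw [ENNReal.toReal_add h1 ENNReal.one_ne_top, ENNReal.toReal_add (hfin s hs) (hfin t ht)]
        at h2
      simpa using h2
  have hterm : ∀ t, 0 < t → (ENNReal.ofReal t)⁻¹ * E t = ENNReal.ofReal (e t / t) := by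
    intro t ht
    rw [heE t ht, ← ENNReal.ofReal_inv_of_pos ht, ← ENNReal.ofReal_mul (by positivity)]
    congr 1
    ring
  have hlow : ∀ t, 0 < t → ENNReal.ofReal (e t / t) ≤ cHe P B := by
    intro t ht
    rw [← hterm t ht]
    exact le_iSup₂ (f := fun (t : ℝ) (_ : 0 < t) => (ENNReal.ofReal t)⁻¹ * E t) t ht
  have hup : ∀ t, 0 < t → cHe P B ≤ ENNReal.ofReal ((e t + 1) / t) := by
    intro t ht
    refine iSup₂_le fun s hs => ?_
    have := hterm s hs
    rw [hE] at this
    simp only at this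
    rw [this]
    exact ENNReal.ofReal_le_ofReal (hfek s t hs ht)
  have htop : cHe P B ≠ ⊤ := ne_top_of_le_ne_top ENNReal.ofReal_ne_top (hup 1 one_pos)
  refine ⟨?_, htop, fun t ht => ?_⟩
  · refine lt_of_lt_of_le ?_ (hlow 1 one_pos)
    rw [ENNReal.ofReal_pos, div_one]
    exact ENNReal.toReal_pos (E_pos hB).ne' (hfin 1 one_pos)
  · have het : 0 ≤ e t := ENNReal.toReal_nonneg
    have h1 : e t / t ≤ cH P B := by
      rw [cH, ← ENNReal.ofReal_le_iff_le_toReal htop]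
      exact hlow t ht
    have h2 : cH P B ≤ (e t + 1) / t := by
      rw [cH]
      exact ENNReal.toReal_le_of_le_ofReal (by positivity) (hup t ht)
    change |cH P B - t⁻¹ * e t| ≤ t⁻¹
    have e3 : t⁻¹ * e t = e t / t := by ring
    have e4 : (e t + 1) / t = e t / t + t⁻¹ := by ring
    rw [e3, abs_le]
    have : 0 < t⁻¹ := by positivity
    constructor <;> linarith

end
end

section
/- Let Z be a standard normal random variable and q ∈ [2,∞). Then for every λ ≥ 0, ‖e^{λZ − λ²/2} − 1‖_{L^q} ≤ √(2 log 2) · √(q−1) · λ · e^{(q−1)λ²}. -/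
open MeasureTheory ProbabilityTheory Filter Set ENNReal Asymptotics
open scoped NNReal Classical Topology

noncomputable section

lemma mink_aux (ν γ : Measure ℝ) [SFinite ν] [SFinite γ] (h : ℝ → ℝ → ℝ≥0∞)
    (hm : Measurable (Function.uncurry h)) (k : ℝ → ℝ≥0∞) (hk : Measurable k)
    (hk0 : ∀ s, k s ≠ 0) (hkt : ∀ s, k s ≠ ∞) (q : ℝ) (hq : 1 < q)
    (hb : ∀ᵐ s ∂ν, ∫⁻ z, h z s ^ q ∂γ ≤ k s ^ q) :
    ∫⁻ z, (∫⁻ s, h z s ∂ν) ^ q ∂γ ≤ (∫⁻ s, k s ∂ν) ^ q := by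
  have hq0 : 0 < q := by linarith
  have hc : q.HolderConjugate (q / (q - 1)) := Real.HolderConjugate.conjExponent hq
  set p := q / (q - 1) with hp
  have hp0 : 0 < p := hc.symm.pos
  have hqp : q * (1 / p) = q - 1 := by rw [hp]; field_simp
  have hmz : ∀ z, Measurable (h z) := fun z =>
    hm.comp (f := fun s => (z, s)) (by fun_prop)
  have hms : ∀ s, Measurable (fun z => h z s) := fun s =>
    hm.comp (f := fun z => (z, s)) (by fun_prop)
  have key : ∀ z, (∫⁻ s, h z s ∂ν) ^ q ≤
      (∫⁻ s, h z s ^ q * k s ^ (-(q - 1)) ∂ν) * (∫⁻ s, k s ∂ν) ^ (q - 1) := by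
    intro z
    have := ENNReal.lintegral_mul_le_Lp_mul_Lq ν hc
      (f := fun s => h z s * k s ^ (-(1 / p))) (g := fun s => k s ^ (1 / p))
      (((hmz z).mul (hk.pow_const _)).aemeasurable) ((hk.pow_const _).aemeasurable)
    have e1 : ∀ s, ((fun s => h z s * k s ^ (-(1 / p))) * (fun s => k s ^ (1 / p))) s = h z s := by
      intro s
      simp only [Pi.mul_apply]
      rw [mul_assoc, ← ENNReal.rpow_add _ _ (hk0 s) (hkt s)]
      simp
    have e2 : ∀ s, (k s ^ (1 / p)) ^ p = k s := by
      intro s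
      rw [← ENNReal.rpow_mul, one_div_mul_cancel hp0.ne', ENNReal.rpow_one]
    have e3 : ∀ s, (h z s * k s ^ (-(1 / p))) ^ q = h z s ^ q * k s ^ (-(q - 1)) := by
      intro s
      rw [ENNReal.mul_rpow_of_nonneg _ _ hq0.le, ← ENNReal.rpow_mul, ← hqp]
      congr 2; ring
    simp only [e1, e2, e3] at this
    calc _ ≤ _ := ENNReal.rpow_le_rpow this hq0.le
      _ = _ := by
        rw [ENNReal.mul_rpow_of_nonneg _ _ hq0.le, ← ENNReal.rpow_mul, ← ENNReal.rpow_mul,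
          one_div_mul_cancel hq0.ne', ENNReal.rpow_one, mul_comm (1 / p), hqp]
  have hmeas : Measurable (Function.uncurry fun z s => h z s ^ q * k s ^ (-(q - 1))) :=
    (hm.pow_const q).mul ((hk.comp measurable_snd).pow_const _)
  calc ∫⁻ z, (∫⁻ s, h z s ∂ν) ^ q ∂γ
      ≤ ∫⁻ z, (∫⁻ s, h z s ^ q * k s ^ (-(q - 1)) ∂ν) * (∫⁻ s, k s ∂ν) ^ (q - 1) ∂γ :=
        lintegral_mono key
    _ = (∫⁻ z, ∫⁻ s, h z s ^ q * k s ^ (-(q - 1)) ∂ν ∂γ) * (∫⁻ s, k s ∂ν) ^ (q - 1) :=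
        lintegral_mul_const _ hmeas.lintegral_prod_right'
    _ = (∫⁻ s, ∫⁻ z, h z s ^ q * k s ^ (-(q - 1)) ∂γ ∂ν) * (∫⁻ s, k s ∂ν) ^ (q - 1) := by
        rw [lintegral_lintegral_swap hmeas.aemeasurable]
    _ ≤ (∫⁻ s, k s ∂ν) * (∫⁻ s, k s ∂ν) ^ (q - 1) := by
        gcongr ?_ * _
        apply lintegral_mono_ae
        filter_upwards [hb] with s hs
        rw [lintegral_mul_const _ ((hms s).pow_const q)]
        calc _ ≤ k s ^ q * k s ^ (-(q - 1)) := by gcongr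
          _ = k s := by
            rw [← ENNReal.rpow_add _ _ (hk0 s) (hkt s)]; simp
    _ = _ := by
        nth_rw 1 [← ENNReal.rpow_one (∫⁻ s, k s ∂ν)]
        rw [← ENNReal.rpow_add_of_nonneg _ _ zero_le_one (by linarith)]
        simp

lemma gamma_aux (q : ℝ) (hq : 2 < q) :
    2 ^ (q / 2) * Real.Gamma ((q + 1) / 2) / √Real.pi ≤ √(q - 1) ^ q := by
  have hG : 0 < Real.Gamma ((q + 1) / 2) := Real.Gamma_pos_of_pos (by linarith)
  have hpi := Real.pi_pos
  have h1 := Real.Gamma_mul_add_mul_le_rpow_Gamma_mul_rpow_Gamma (s := 1 / 2) (t := (q + 1) / 2)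
    (a := 2 / q) (b := 1 - 2 / q) (by norm_num) (by linarith) (by positivity)
    (by rw [sub_pos, div_lt_one (by linarith)]; exact hq) (by ring)
  have e : 2 / q * (1 / 2) + (1 - 2 / q) * ((q + 1) / 2) = (q - 1) / 2 := by
    field_simp; ring
  have h2 : Real.Gamma ((q + 1) / 2) = (q - 1) / 2 * Real.Gamma ((q - 1) / 2) := by
    rw [← Real.Gamma_add_one (by linarith)]; congr 1; ring
  rw [e, Real.Gamma_one_half_eq] at h1
  set G := Real.Gamma ((q + 1) / 2)
  have h3 : G ≤ (q - 1) / 2 * (√Real.pi ^ (2 / q) * G ^ (1 - 2 / q)) := by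
    nth_rw 1 [h2]
    exact mul_le_mul_of_nonneg_left h1 (by linarith)
  have h4 : G ^ (2 / q) ≤ (q - 1) / 2 * √Real.pi ^ (2 / q) := by
    have hh : 0 < G ^ (1 - 2 / q) := by positivity
    refine le_of_mul_le_mul_right ?_ hh
    rw [← Real.rpow_add hG, mul_assoc]
    simpa using h3
  have h5 : G ≤ ((q - 1) / 2 * √Real.pi ^ (2 / q)) ^ (q / 2) := by
    have := Real.rpow_le_rpow (by positivity) h4 (show 0 ≤ q / 2 by linarith)
    rwa [← Real.rpow_mul hG.le, show 2 / q * (q / 2) = 1 by field_simp, Real.rpow_one] at this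
  rw [Real.mul_rpow (by linarith) (by positivity), ← Real.rpow_mul (by positivity),
    show 2 / q * (q / 2) = 1 by field_simp, Real.rpow_one,
    Real.div_rpow (by linarith) (by norm_num)] at h5
  rw [Real.sqrt_eq_rpow (q - 1), ← Real.rpow_mul (by linarith), show 1 / 2 * q = q / 2 by ring,
    div_le_iff₀ (by positivity)]
  have h2p : (0:ℝ) < 2 ^ (q / 2) := by positivity
  calc _ ≤ 2 ^ (q / 2) * ((q - 1) ^ (q / 2) / 2 ^ (q / 2) * √Real.pi) := by gcongr
    _ = _ := by field_simp

lemma moment_aux (q : ℝ) (hq : 2 < q) :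
    ∫ z, |z| ^ q ∂(gaussianReal 0 1) = 2 ^ (q / 2) * Real.Gamma ((q + 1) / 2) / √Real.pi := by
  rw [integral_gaussianReal_eq_integral_smul one_ne_zero]
  have e : ∀ x : ℝ, gaussianPDFReal 0 1 x • |x| ^ q =
     (fun y : ℝ => (√(2 * Real.pi))⁻¹ * (y ^ q * Real.exp (-(1/2) * y ^ (2:ℝ)))) |x| := by
    intro x
    simp [gaussianPDFReal]
    rw [show -x ^ 2 / 2 = -(2⁻¹ * x ^ 2) by ring]
    ring
  simp_rw [e]
  rw [integral_comp_abs (f := (fun y : ℝ => (√(2 * Real.pi))⁻¹ * (y ^ q * Real.exp (-(1/2) * y ^ (2:ℝ))))), integral_const_mul, integral_rpow_mul_exp_neg_mul_rpow (by norm_num) (by linarith) (by norm_num)]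
  rw [Real.sqrt_mul (by norm_num), one_div, Real.inv_rpow (by norm_num), ← Real.rpow_neg (by norm_num),
    show - (-(q+1)/2) = q / 2 + 1 / 2 by ring, Real.rpow_add (by norm_num), ← Real.sqrt_eq_rpow]
  field_simp

lemma eLpNorm_gauss (q : ℝ) (hq : 2 ≤ q) :
    eLpNorm (fun z : ℝ => z) (ENNReal.ofReal q) (gaussianReal 0 1) ≤ ENNReal.ofReal √(q - 1) := by
  have hq0 : 0 < q := by linarith
  have hmem : MemLp (fun z : ℝ => z) (ENNReal.ofReal q) (gaussianReal 0 1) :=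
    memLp_id_gaussianReal' _ (by simp)
  have hmm : ∫ z, |z| ^ q ∂(gaussianReal 0 1) ≤ √(q - 1) ^ q := by
    rcases hq.eq_or_lt with rfl | h
    · have := variance_fun_id_gaussianReal (μ := 0) (v := 1)
      rw [variance_eq_integral (by fun_prop)] at this
      norm_num at this ⊢
      simp [this]
    · rw [moment_aux q h]; exact gamma_aux q h
  rw [hmem.eLpNorm_eq_integral_rpow_norm (by simpa using hq0) (by simp)]
  apply ENNReal.ofReal_le_ofReal
  rw [ENNReal.toReal_ofReal hq0.le]
  simp only [Real.norm_eq_abs]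
  calc _ ≤ (√(q - 1) ^ q) ^ q⁻¹ := by
        apply Real.rpow_le_rpow _ hmm (by positivity)
        exact integral_nonneg fun z => by positivity
    _ = _ := by rw [← Real.rpow_mul (by positivity), mul_inv_cancel₀ hq0.ne', Real.rpow_one]

lemma inner_aux (q : ℝ) (hq : 2 ≤ q) (s : ℝ) (hs : 0 ≤ s) :
    ∫⁻ z, ‖(z - s) * Real.exp (s * z - s ^ 2 / 2)‖ₑ ^ q ∂(gaussianReal 0 1) ≤
      ENNReal.ofReal (Real.exp ((q - 1) * s ^ 2 / 2) * (√(q - 1) + (q - 1) * s)) ^ q := by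
  have hq0 : 0 < q := by linarith
  have e1 : ∀ z : ℝ, gaussianPDF 0 1 z * ‖(z - s) * Real.exp (s * z - s ^ 2 / 2)‖ₑ ^ q =
      ENNReal.ofReal (Real.exp ((q - 1) * s ^ 2 / 2)) ^ q *
        (fun y => gaussianPDF 0 1 y * ‖y + (q - 1) * s‖ₑ ^ q) (z - q * s) := by
    intro z
    simp only [gaussianPDF, Real.enorm_eq_ofReal_abs]
    rw [ENNReal.ofReal_rpow_of_nonneg (by positivity) hq0.le,
      ENNReal.ofReal_rpow_of_nonneg (by positivity) hq0.le,
      ENNReal.ofReal_rpow_of_nonneg (by positivity) hq0.le,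
      ← ENNReal.ofReal_mul (gaussianPDFReal_nonneg _ _ _),
      ← ENNReal.ofReal_mul (gaussianPDFReal_nonneg _ _ _),
      ← ENNReal.ofReal_mul (by positivity)]
    congr 1
    rw [show z - q * s + (q - 1) * s = z - s by ring, abs_mul, Real.abs_exp,
      Real.mul_rpow (by positivity) (by positivity), ← Real.exp_mul, ← Real.exp_mul]
    simp only [gaussianPDFReal, NNReal.coe_one, mul_one, sub_zero]
    have : Real.exp (-z ^ 2 / 2) * Real.exp ((s * z - s ^ 2 / 2) * q) =
        Real.exp ((q - 1) * s ^ 2 / 2 * q) * Real.exp (-(z - q * s) ^ 2 / 2) := by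
      rw [← Real.exp_add, ← Real.exp_add]; congr 1; ring
    linear_combination (√(2 * Real.pi))⁻¹ * |z - s| ^ q * this
  have e2 : ∫⁻ z, ‖z + (q - 1) * s‖ₑ ^ q ∂(gaussianReal 0 1) ≤
      ENNReal.ofReal (√(q - 1) + (q - 1) * s) ^ q := by
    have h1 : eLpNorm (fun z : ℝ => z + (q - 1) * s) (ENNReal.ofReal q) (gaussianReal 0 1) ≤
        ENNReal.ofReal (√(q - 1) + (q - 1) * s) := by
      refine (eLpNorm_add_le (f := fun z : ℝ => z) (g := fun _ => (q - 1) * s) (by fun_prop)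
        (by fun_prop) (by rw [ENNReal.one_le_ofReal]; linarith)).trans ?_
      rw [ENNReal.ofReal_add (by positivity) (mul_nonneg (by linarith) hs)]
      gcongr
      · exact eLpNorm_gauss q hq
      · rw [eLpNorm_const _ (by simpa using hq0) (IsProbabilityMeasure.ne_zero _)]
        rw [Real.enorm_eq_ofReal_abs, abs_of_nonneg (mul_nonneg (by linarith : 0 ≤ q - 1) hs)]
        simp
    rw [eLpNorm_eq_lintegral_rpow_enorm_toReal (by simpa using hq0) (by simp), ENNReal.toReal_ofReal hq0.le] at h1
    have := ENNReal.rpow_le_rpow h1 hq0.le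
    rwa [← ENNReal.rpow_mul, one_div_mul_cancel hq0.ne', ENNReal.rpow_one] at this
  have hd : ∀ f : ℝ → ℝ≥0∞, Measurable f → ∫⁻ z, f z ∂(gaussianReal 0 1) = ∫⁻ z, gaussianPDF 0 1 z * f z := by
    intro f hf
    rw [gaussianReal_of_var_ne_zero _ one_ne_zero,
      lintegral_withDensity_eq_lintegral_mul _ (measurable_gaussianPDF 0 1) hf]
    rfl
  rw [hd _ (by fun_prop)] at e2 ⊢
  simp_rw [e1]
  rw [lintegral_const_mul' _ _ (by finiteness),
    lintegral_sub_right_eq_self (fun y => gaussianPDF 0 1 y * ‖y + (q - 1) * s‖ₑ ^ q),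
    ENNReal.ofReal_mul (by positivity), ENNReal.mul_rpow_of_nonneg _ _ hq0.le]
  gcongr

lemma C_aux (u : ℝ) (hu : 0 ≤ u) :
    Real.exp (u ^ 2 / 2) * (1 + u) ≤
      √(2 * Real.log 2) * (1 + 2 * u ^ 2) * Real.exp (u ^ 2) := by
  have hC : (1.17 : ℝ) ≤ √(2 * Real.log 2) := by
    apply Real.le_sqrt_of_sq_le
    have := Real.log_two_gt_d9
    norm_num at this ⊢
    linarith
  have h1 := Real.add_one_le_exp (u ^ 2 / 2)
  have h2 : Real.exp (u ^ 2) = Real.exp (u ^ 2 / 2) * Real.exp (u ^ 2 / 2) := by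
    rw [← Real.exp_add]; congr 1; ring
  rw [h2]
  have h3 : 1 + u ≤ 1.17 * (1 + 2 * u ^ 2) * (u ^ 2 / 2 + 1) := by
    nlinarith [sq_nonneg (u - 0.2), sq_nonneg (u ^ 2)]
  calc _ ≤ Real.exp (u ^ 2 / 2) * (√(2 * Real.log 2) * (1 + 2 * u ^ 2) * Real.exp (u ^ 2 / 2)) := by
        gcongr
        refine h3.trans ?_
        gcongr
    _ = _ := by ring

/-- **An estimate on the log-normal distribution.** If `Z` is standard normal and
`q ∈ [2,∞)`, then for all `λ ≥ 0`,
`‖e^{λZ - λ²/2} - 1‖_{L^q} ≤ √(2 log 2) √(q-1) λ e^{(q-1)λ²}`. -/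
theorem lognormal_Lq_estimate
    {Ω : Type*} [MeasurableSpace Ω] (P : Measure Ω) [IsProbabilityMeasure P]
    (Z : Ω → ℝ) (hZ : Measure.map Z P = gaussianReal 0 1)
    (q : ℝ) (hq : 2 ≤ q) (l : ℝ) (hl : 0 ≤ l) :
    eLpNorm (fun ω => Real.exp (l * Z ω - l ^ 2 / 2) - 1) (ENNReal.ofReal q) P
      ≤ ENNReal.ofReal
        (Real.sqrt (2 * Real.log 2) * Real.sqrt (q - 1) * l * Real.exp ((q - 1) * l ^ 2)) := by
  have hq0 : 0 < q := by linarith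
  have hZm : AEMeasurable Z P := AEMeasurable.of_map_ne_zero (by rw [hZ]; exact NeZero.ne _)
  have hmap := eLpNorm_map_measure (μ := P) (f := Z)
    (g := fun z => Real.exp (l * z - l ^ 2 / 2) - 1) (p := ENNReal.ofReal q) (by fun_prop) hZm
  rw [Function.comp_def] at hmap
  rw [← hmap, hZ]
  set C := √(2 * Real.log 2) with hC
  set r := √(q - 1) with hr
  have hr2 : r ^ 2 = q - 1 := Real.sq_sqrt (by linarith)
  have hr0 : 0 < r := Real.sqrt_pos.2 (by linarith)
  have hC0 : 0 < C := Real.sqrt_pos.2 (by have := Real.log_pos one_lt_two; linarith)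
  set k : ℝ → ℝ := fun s => C * r * (1 + 2 * (r * s) ^ 2) * Real.exp ((r * s) ^ 2) with hk
  have hk0 : ∀ s, 0 < k s := fun s => by simp only [hk]; positivity
  have hkc : Continuous k := by fun_prop
  set K := C * r * l * Real.exp ((q - 1) * l ^ 2) with hK
  have hint : ∫⁻ s in Ioc 0 l, ENNReal.ofReal (k s) = ENNReal.ofReal K := by
    rw [← ofReal_integral_eq_lintegral_ofReal
      ((hkc.intervalIntegrable 0 l).1) (ae_of_all _ fun s => (hk0 s).le),
      ← intervalIntegral.integral_of_le hl]
    rw [intervalIntegral.integral_eq_sub_of_hasDerivAt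
      (f := fun s => C * r * s * Real.exp ((q - 1) * s ^ 2)) _ (hkc.intervalIntegrable 0 l)]
    · simp [hK]
    · intro s _
      have h1 : HasDerivAt (fun s : ℝ => (q - 1) * s ^ 2) ((q - 1) * (2 * s)) s := by
        simpa using (hasDerivAt_pow 2 s).const_mul (q - 1)
      have h2 := ((hasDerivAt_id s).const_mul (C * r)).mul h1.exp
      refine h2.congr_deriv ?_
      simp only [hk, id, mul_pow, hr2]
      ring
  have hpt : ∀ z : ℝ, ‖Real.exp (l * z - l ^ 2 / 2) - 1‖ₑ ≤
      ∫⁻ s in Ioc 0 l, ‖(z - s) * Real.exp (s * z - s ^ 2 / 2)‖ₑ := by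
    intro z
    have hc : Continuous fun s : ℝ => (z - s) * Real.exp (s * z - s ^ 2 / 2) := by fun_prop
    have := intervalIntegral.integral_eq_sub_of_hasDerivAt (a := 0) (b := l)
      (f := fun s => Real.exp (s * z - s ^ 2 / 2))
      (f' := fun s => (z - s) * Real.exp (s * z - s ^ 2 / 2)) (fun s _ => by
        have h1 : HasDerivAt (fun s : ℝ => s * z - s ^ 2 / 2) (1 * z - (2 * s) / 2) s := by
          refine (((hasDerivAt_id s).mul_const z).sub
            ((hasDerivAt_pow 2 s).div_const 2)).congr_deriv ?_
          simp
        refine h1.exp.congr_deriv ?_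
        ring) (hc.intervalIntegrable 0 l)
    have e : Real.exp (l * z - l ^ 2 / 2) - 1 =
        ∫ s in Ioc 0 l, (z - s) * Real.exp (s * z - s ^ 2 / 2) := by
      rw [← intervalIntegral.integral_of_le hl, this]; simp
    rw [e]
    exact enorm_integral_le_lintegral_enorm _
  have main := mink_aux (volume.restrict (Ioc 0 l)) (gaussianReal 0 1)
    (fun z s => ‖(z - s) * Real.exp (s * z - s ^ 2 / 2)‖ₑ)
    (by unfold Function.uncurry; fun_prop) (fun s => ENNReal.ofReal (k s))
    (by fun_prop) (fun s => by simpa using hk0 s) (fun s => by simp) q (by linarith)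
    (by
      rw [ae_restrict_iff' measurableSet_Ioc]
      refine ae_of_all _ fun s hs => (inner_aux q hq s hs.1.le).trans ?_
      gcongr
      have h := C_aux (r * s) (mul_nonneg hr0.le hs.1.le)
      have h' := mul_le_mul_of_nonneg_left h hr0.le
      simp only [hk]
      rw [← hr, ← hr2]
      rw [show r ^ 2 * s ^ 2 / 2 = (r * s) ^ 2 / 2 by ring]
      calc _ = _ := by ring
        _ ≤ _ := h'
        _ = _ := by ring)
  rw [hint] at main
  rw [eLpNorm_eq_lintegral_rpow_enorm_toReal (by simpa using hq0) (by simp),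
    ENNReal.toReal_ofReal hq0.le]
  calc _ ≤ (ENNReal.ofReal K ^ q) ^ (1 / q) := by
        gcongr
        refine le_trans (lintegral_mono fun z => ?_) main
        exact ENNReal.rpow_le_rpow (hpt z) hq0.le
    _ = _ := by rw [← ENNReal.rpow_mul, mul_one_div_cancel hq0.ne', ENNReal.rpow_one]

end
end
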